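/- Let N ≥ 2 and 1 ≤ m ≤ N−1. Suppose there is a subset B ⊂ Λ of positive dx measure such that for a.e. x_N ∈ B there is a constant γ(x_N) > 0 with P(·, x_N) ≥ γ(x_N) ρ^(N−1) a.e. on Λ^{N−1}, where ρ^(N−1) is the (N−1)-particle reduction of P. Then V_P = V_{ρ^(m)}. If, in addition, V_P ≠ ∅ and (W + log P)₊ ∈ L¹(Λ^N; P d^N x), then there exists U ∈ V_P, with m-sum structure U(x₁,…,x_N) = Σ_{1≤i₁<⋯<i_m≤N} u(x_{i₁},…,x_{i_m}) a.e., such that ρ_U^(m) = ρ^(m) a.e. on Λ^m; moreover, if U₀, U₁ ∈ V_P (with generators u₀, u₁) satisfy ρ_{U₀}^(m) = ρ_{U₁}^(m) = ρ^(m) a.e., then U₁ − U₀ is equal a.e. on Λ^N to a real constant and u₁ − u₀ is equal a.e. on Λ^m to a real constant. -/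

import Mathlib

open MeasureTheory Real Filter
open scoped ENNReal

noncomputable section

variable {Λ : Type*} [MeasurableSpace Λ]

/-- The product measure on `Λ^k` (the `k`-fold product of `μ`). -/
def pm (μ : Measure Λ) (k : ℕ) : Measure (Fin k → Λ) := Measure.pi fun _ => μ

/-- A function on `Λ^k` is symmetric if it is invariant under all permutations
of its variables. -/
def IsSymm' {Λ : Type*} (k : ℕ) (f : (Fin k → Λ) → ℝ) : Prop :=
  ∀ σ : Equiv.Perm (Fin k), ∀ x, f (x ∘ σ) = f x

/-- The `m`-sum `Σ_{1 ≤ i₁ < ⋯ < i_m ≤ N} v(x_{i₁},…,x_{i_m})`. -/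
def mSum {Λ : Type*} (N m : ℕ) (v : (Fin m → Λ) → ℝ) (x : Fin N → Λ) : ℝ :=
  ∑ s ∈ Finset.powersetCard m (Finset.univ : Finset (Fin N)),
    if h : s.card = m then v (fun i => x (s.orderEmbOfFin h i)) else 0

/-- `V` has `m`-sum structure with (symmetric, measurable, real-valued) generator `v`. -/
def HasSumStruct (μ : Measure Λ) (N m : ℕ) (V : (Fin N → Λ) → ℝ)
    (v : (Fin m → Λ) → ℝ) : Prop :=
  IsSymm' m v ∧ Measurable v ∧ V =ᵐ[pm μ N] mSum N m v

/-- The measure `P d^N x`. -/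
def Pmeas (μ : Measure Λ) (N : ℕ) (P : (Fin N → Λ) → ℝ) : Measure (Fin N → Λ) :=
  (pm μ N).withDensity fun x => ENNReal.ofReal (P x)

/-- The measure `e^{-W} d^N x`. -/
def Wmeas (μ : Measure Λ) (N : ℕ) (W : (Fin N → Λ) → ℝ) : Measure (Fin N → Λ) :=
  (pm μ N).withDensity fun x => ENNReal.ofReal (Real.exp (-(W x)))

/-- The partition function `Z(V) = ∫ e^{-V-W} d^N x`, as an extended nonnegative real. -/
def ZE (μ : Measure Λ) (N : ℕ) (W V : (Fin N → Λ) → ℝ) : ℝ≥0∞ :=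
  ∫⁻ x, ENNReal.ofReal (Real.exp (-(V x) - W x)) ∂(pm μ N)

/-- The partition function `Z(V)` as a real number. -/
def Zfun (μ : Measure Λ) (N : ℕ) (W V : (Fin N → Λ) → ℝ) : ℝ :=
  (ZE μ N W V).toReal

/-- The functional `F_P(V) = exp(-∫ V P d^N x) / Z(V)`. -/
def FP (μ : Measure Λ) (N : ℕ) (P W V : (Fin N → Λ) → ℝ) : ℝ :=
  Real.exp (-∫ x, V x ∂(Pmeas μ N P)) / Zfun μ N W V

/-- Membership in the set `V_P`. -/
def memVP (μ : Measure Λ) (N m : ℕ) (P W V : (Fin N → Λ) → ℝ) : Prop :=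
  Integrable V (Pmeas μ N P) ∧
  Integrable (fun x => Real.exp (-(V x))) (Wmeas μ N W) ∧
  ∃ v, HasSumStruct μ N m V v

/-- Gluing `(y, z) ∈ Λ^m × Λ^{N-m}` into a point of `Λ^N`. -/
def glue {Λ : Type*} {N m : ℕ} (h : m ≤ N) (y : Fin m → Λ) (z : Fin (N - m) → Λ) :
    Fin N → Λ :=
  fun i => Fin.append y z (Fin.cast (by omega) i)

/-- The `m`-particle reduction `ρ^{(m)}` of `P`. -/
def rho (μ : Measure Λ) (N m : ℕ) (h : m ≤ N) (P : (Fin N → Λ) → ℝ)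
    (y : Fin m → Λ) : ℝ :=
  ∫ z, P (glue h y z) ∂(pm μ (N - m))

/-- The measure `ρ^{(m)} d^m x`. -/
def rhomeas (μ : Measure Λ) (N m : ℕ) (h : m ≤ N) (P : (Fin N → Λ) → ℝ) :
    Measure (Fin m → Λ) :=
  (pm μ m).withDensity fun y => ENNReal.ofReal (rho μ N m h P y)

/-- Membership in the set `V_{ρ^{(m)}}`. -/
def memVrho (μ : Measure Λ) (N m : ℕ) (h : m ≤ N) (P W V : (Fin N → Λ) → ℝ) : Prop :=
  Integrable (fun x => Real.exp (-(V x))) (Wmeas μ N W) ∧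
  ∃ v, HasSumStruct μ N m V v ∧ Integrable v (rhomeas μ N m h P)

/-- The `m`-particle density `ρ_U^{(m)}` associated with the potential `U`. -/
def rhoU (μ : Measure Λ) (N m : ℕ) (h : m ≤ N) (W U : (Fin N → Λ) → ℝ)
    (y : Fin m → Λ) : ℝ :=
  (∫ z, Real.exp (-(W (glue h y z)) - U (glue h y z)) ∂(pm μ (N - m))) / Zfun μ N W U


/-- Gluing `y ∈ Λ^{N-1}` and a last coordinate `t ∈ Λ` into a point of `Λ^N`. -/
def glueLast {Λ : Type*} {N : ℕ} (h : 1 ≤ N) (y : Fin (N - 1) → Λ) (t : Λ) :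
    Fin N → Λ :=
  fun i => (Fin.snoc y t : Fin (N - 1 + 1) → Λ) (Fin.cast (by omega : N = N - 1 + 1) i)

/-- A function on `m`-subsets of `X` whose sums over the `m`-subsets of every `N`-subset vanish
is zero, as soon as `X` has at least `N + m` elements. -/
lemma eq_zero_of_sum_powersetCard_eq_zero {ι : Type*} [DecidableEq ι] (m : ℕ) :
    ∀ (N : ℕ) (X : Finset ι) (f : Finset ι → ℝ), m ≤ N → N + m ≤ X.card →
      (∀ T ⊆ X, T.card = N → ∑ s ∈ T.powersetCard m, f s = 0) →
      ∀ s ⊆ X, s.card = m → f s = 0 := by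
  induction m with
  | zero =>
    intro N X f _ hX h s hs hs0
    obtain ⟨T, hTX, hT⟩ := Finset.exists_subset_card_eq (s := X) (n := N) (by omega)
    have := h T hTX hT
    rw [Finset.card_eq_zero.1 hs0]
    simpa using this
  | succ m ih =>
    intro N X f hmN hX h
    have exch : ∀ a ∈ X, ∀ b ∈ X, a ≠ b → ∀ r ⊆ (X.erase a).erase b, r.card = m →
        f (insert a r) = f (insert b r) := by
      intro a ha b hb hab r hr hrm
      have hcard : ((X.erase a).erase b).card = X.card - 2 := by
        rw [Finset.card_erase_of_mem (by simp [hb, hab.symm]), Finset.card_erase_of_mem ha]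
        omega
      have := ih (N - 1) ((X.erase a).erase b) (fun r => f (insert a r) - f (insert b r))
        (by omega) (by omega) ?_ r hr hrm
      · linarith
      intro T hT hTc
      have haT : a ∉ T := fun h' => by simpa using hT h'
      have hbT : b ∉ T := fun h' => by simpa using hT h'
      have hTX : T ⊆ X := fun x hx => by
        have := hT hx
        simp only [Finset.mem_erase] at this
        exact this.2.2
      have key : ∀ c ∈ X, c ∉ T →
          ∑ s ∈ T.powersetCard (m + 1), f s + ∑ s ∈ T.powersetCard m, f (insert c s) = 0 := by
        intro c hc hcT
        have := h (insert c T) (Finset.insert_subset hc hTX)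
          (by rw [Finset.card_insert_of_notMem hcT]; omega)
        rw [Finset.powersetCard_succ_insert hcT, Finset.sum_union, Finset.sum_image] at this
        · exact this
        · intro s hs t ht hst
          have hs' : c ∉ s := fun h' => hcT ((Finset.mem_powersetCard.1 hs).1 h')
          have ht' : c ∉ t := fun h' => hcT ((Finset.mem_powersetCard.1 ht).1 h')
          rw [← Finset.erase_insert hs', ← Finset.erase_insert ht', hst]
        · rw [Finset.disjoint_left]
          intro s hs hs'
          obtain ⟨t, -, rfl⟩ := Finset.mem_image.1 hs'
          exact hcT ((Finset.mem_powersetCard.1 hs).1 (Finset.mem_insert_self _ _))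
      have h1 := key a ha haT
      have h2 := key b hb hbT
      rw [Finset.sum_sub_distrib]
      linarith
    have const : ∀ k : ℕ, ∀ s ⊆ X, ∀ t ⊆ X, s.card = m + 1 → t.card = m + 1 →
        (s \ t).card = k → f s = f t := by
      intro k
      induction k with
      | zero =>
        intro s _ t _ hs ht hk
        have : s ⊆ t := by simpa [Finset.sdiff_eq_empty_iff_subset] using hk
        rw [Finset.eq_of_subset_of_card_le this (by omega)]
      | succ k ihk =>
        intro s hsX t htX hs ht hk
        obtain ⟨a, ha⟩ : (s \ t).Nonempty := Finset.card_pos.1 (by omega)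
        have hk' : (t \ s).card = k + 1 := by
          rw [← hk]; exact Finset.card_sdiff_comm (by omega)
        obtain ⟨b, hb⟩ : (t \ s).Nonempty := Finset.card_pos.1 (by omega)
        rw [Finset.mem_sdiff] at ha hb
        have hab : a ≠ b := fun h' => hb.2 (h' ▸ ha.1)
        have hbs : b ∉ s.erase a := fun h' => hb.2 (Finset.mem_of_mem_erase h')
        have e1 := exch a (hsX ha.1) b (htX hb.1) hab (s.erase a) (by
          intro x hx
          have hxb : x ≠ b := fun h' => hbs (h' ▸ hx)
          rw [Finset.mem_erase] at hx
          simp [hx.1, hxb, hsX hx.2]) (by rw [Finset.card_erase_of_mem ha.1]; omega)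
        rw [Finset.insert_erase ha.1] at e1
        rw [e1]
        apply ihk _ _ _ htX _ ht
        · have : insert b (s.erase a) \ t = (s \ t).erase a := by
            ext x
            simp only [Finset.mem_sdiff, Finset.mem_insert, Finset.mem_erase]
            constructor
            · rintro ⟨rfl | h1, h2⟩
              · exact absurd hb.1 h2
              · exact ⟨h1.1, h1.2, h2⟩
            · rintro ⟨h1, h2, h3⟩
              exact ⟨Or.inr ⟨h1, h2⟩, h3⟩
          rw [this, Finset.card_erase_of_mem (by simp [ha])]
          omega
        · exact Finset.insert_subset (htX hb.1) ((Finset.erase_subset _ _).trans hsX)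
        · rw [Finset.card_insert_of_notMem hbs, Finset.card_erase_of_mem ha.1]; omega
    intro s hs hsm
    obtain ⟨T, hsT, hTX, hT⟩ :=
      Finset.exists_subsuperset_card_eq hs (n := N) (by omega) (by omega)
    have h0 := h T hTX hT
    rw [Finset.sum_congr rfl (g := fun _ => f s) (fun t ht => by
      rw [Finset.mem_powersetCard] at ht
      exact const _ t (ht.1.trans hTX) s hs ht.2 hsm rfl)] at h0
    simp only [Finset.sum_const, Finset.card_powersetCard, hT, nsmul_eq_mul, mul_eq_zero,
      Nat.cast_eq_zero] at h0
    rcases h0 with h0 | h0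
    · exact absurd h0 (Nat.choose_pos hmN).ne'
    · exact h0

/-- A function on `m`-subsets is recovered linearly from its sums over the `m`-subsets of
`N`-subsets. -/
lemma exists_coeff_powersetCard {ι : Type*} [DecidableEq ι] [Fintype ι] (N m : ℕ) (hmN : m ≤ N)
    (hι : N + m ≤ Fintype.card ι) (s : Finset ι) (hs : s.card = m) :
    ∃ c : Finset ι → ℝ, ∀ f : Finset ι → ℝ,
      f s = ∑ T ∈ (Finset.univ : Finset ι).powersetCard N,
        c T * ∑ r ∈ T.powersetCard m, f r := by
  classical
  let ext : ({r : Finset ι // r.card = m} → ℝ) → Finset ι → ℝ :=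
    fun g r => if h : r.card = m then g ⟨r, h⟩ else 0
  let L : ({r : Finset ι // r.card = m} → ℝ) →ₗ[ℝ] ({T : Finset ι // T.card = N} → ℝ) :=
    { toFun := fun g T => ∑ r ∈ T.1.powersetCard m, ext g r
      map_add' := by
        intro g g'
        funext T
        simp only [Pi.add_apply, ← Finset.sum_add_distrib]
        refine Finset.sum_congr rfl fun r hr => ?_
        have : r.card = m := (Finset.mem_powersetCard.1 hr).2
        simp [ext, this]
      map_smul' := by
        intro a g
        funext T
        simp only [Pi.smul_apply, smul_eq_mul, RingHom.id_apply, Finset.mul_sum]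
        refine Finset.sum_congr rfl fun r hr => ?_
        have : r.card = m := (Finset.mem_powersetCard.1 hr).2
        simp [ext, this] }
  have hL : LinearMap.ker L = ⊥ := by
    rw [LinearMap.ker_eq_bot']
    intro g hg
    funext r
    have := eq_zero_of_sum_powersetCard_eq_zero m N Finset.univ (ext g) hmN (by simpa using hι)
      (fun T _ hT => congrFun hg ⟨T, hT⟩) r.1 (Finset.subset_univ _) r.2
    simpa [ext, r.2] using this
  obtain ⟨M, hM⟩ := LinearMap.exists_leftInverse_of_injective L hL
  refine ⟨fun T => if h : T.card = N then M (fun j => if ⟨T, h⟩ = j then 1 else 0) ⟨s, hs⟩ else 0,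
    fun f => ?_⟩
  have h1 : f s = M (L fun r => f r.1) ⟨s, hs⟩ := by
    have := LinearMap.congr_fun hM (fun r => f r.1)
    simp only [LinearMap.comp_apply, LinearMap.id_apply] at this
    rw [this]
  have h2 : ∀ T : {T : Finset ι // T.card = N},
      L (fun r => f r.1) T = ∑ r ∈ T.1.powersetCard m, f r := by
    intro T
    refine Finset.sum_congr rfl fun r hr => ?_
    have : r.card = m := (Finset.mem_powersetCard.1 hr).2
    simp [ext, this]
  rw [h1, LinearMap.pi_apply_eq_sum_univ M, Finset.sum_apply,
    Finset.sum_subtype _ (p := fun T : Finset ι => T.card = N)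
      (by simp [Finset.mem_powersetCard])]
  refine Finset.sum_congr rfl fun T _ => ?_
  simp only [Pi.smul_apply, smul_eq_mul, h2 T, T.2, dite_true]
  rw [mul_comm]

/-- The first `m` coordinates of a point of `Λ^N`. -/
def firstCoords {Λ : Type*} {N m : ℕ} (h : m ≤ N) (x : Fin N → Λ) : Fin m → Λ :=
  fun i => x (Fin.castLE h i)

lemma IsSymm'.comp_eq_of_range_eq {Λ ι : Type*} {m : ℕ} {v : (Fin m → Λ) → ℝ}
    (hv : IsSymm' m v) (z : ι → Λ) {e e' : Fin m → ι} (he : Function.Injective e)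
    (he' : Function.Injective e') (hr : Set.range e = Set.range e') :
    v (z ∘ e) = v (z ∘ e') := by
  let σ : Equiv.Perm (Fin m) :=
    (Equiv.ofInjective e he).trans ((Equiv.setCongr hr).trans (Equiv.ofInjective e' he').symm)
  have hσ : e' ∘ σ = e := by
    funext i
    have := Equiv.apply_ofInjective_symm he' ((Equiv.setCongr hr) (Equiv.ofInjective e he i))
    simpa [σ] using this
  rw [← hσ, ← Function.comp_assoc, hv σ]

/-- The value of `v` at the points `z i`, `i ∈ s`, for an `m`-element set `s`. -/
def evalFinset {Λ ι : Type*} {m : ℕ} (v : (Fin m → Λ) → ℝ) (z : ι → Λ) (s : Finset ι) : ℝ :=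
  if h : s.card = m then v (fun i => z ((s.equivFinOfCardEq h).symm i)) else 0

lemma evalFinset_map {Λ ι : Type*} {m : ℕ} {v : (Fin m → Λ) → ℝ}
    (hv : IsSymm' m v) (z : ι → Λ) (e : Fin m ↪ ι) :
    evalFinset v z (Finset.univ.map e) = v (z ∘ e) := by
  have h : (Finset.univ.map e).card = m := by simp
  rw [evalFinset, dif_pos h]
  refine hv.comp_eq_of_range_eq z
    (e := fun i => (((Finset.univ.map e).equivFinOfCardEq h).symm i : ι)) ?_ e.injective ?_
  · exact Subtype.val_injective.comp (Equiv.injective _)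
  · have : (fun i => (((Finset.univ.map e).equivFinOfCardEq h).symm i : ι))
        = Subtype.val ∘ ((Finset.univ.map e).equivFinOfCardEq h).symm := rfl
    rw [this, Set.range_comp, Equiv.range_eq_univ]
    ext; simp

lemma mSum_comp_eq_sum_evalFinset {Λ ι : Type*} {N m : ℕ} {v : (Fin m → Λ) → ℝ}
    (hv : IsSymm' m v) (z : ι → Λ) (e : Fin N ↪ ι) :
    mSum N m v (z ∘ e) = ∑ s ∈ (Finset.univ.map e).powersetCard m, evalFinset v z s := by
  rw [Finset.powersetCard_map, Finset.sum_map, mSum]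
  refine Finset.sum_congr rfl fun s hs => ?_
  have h : s.card = m := (Finset.mem_powersetCard.1 hs).2
  rw [dif_pos h]
  have := evalFinset_map hv z ((s.orderEmbOfFin h).toEmbedding.trans e)
  rw [← Finset.map_map] at this
  have h' : Finset.univ.map (s.orderEmbOfFin h).toEmbedding = s := by
    ext a
    have := Finset.range_orderEmbOfFin s h
    rw [← Finset.mem_coe (s := s), ← this]
    simp
  rw [h'] at this
  exact this.symm

lemma exists_perm_extending {N m : ℕ} (h : m ≤ N) (e : Fin m ↪ Fin N) :
    ∃ σ : Equiv.Perm (Fin N), ∀ i, σ (Fin.castLE h i) = e i := by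
  classical
  let a : {x // x ∈ Set.range (Fin.castLE h)} ≃ {x // x ∈ Set.range e} :=
    (Equiv.ofInjective _ (Fin.castLE_injective h)).symm.trans (Equiv.ofInjective e e.injective)
  refine ⟨a.extendSubtype, fun i => ?_⟩
  rw [Equiv.extendSubtype_apply_of_mem _ _ ⟨i, rfl⟩]
  have : (Equiv.ofInjective _ (Fin.castLE_injective h)).symm ⟨Fin.castLE h i, ⟨i, rfl⟩⟩ = i :=
    Equiv.ofInjective_symm_apply (Fin.castLE_injective h) i
  simp [a, this]

/-- A subset of `N` elements of two copies of `Fin N` is the image of a map sending each `j`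
either to `j` in the first copy or to `τ j` in the second, for some permutation `τ`. -/
lemma exists_transversal {N : ℕ} (T : Finset (Fin N ⊕ Fin N)) (hT : T.card = N) :
    ∃ (A : Finset (Fin N)) (τ : Equiv.Perm (Fin N)) (e : Fin N ↪ Fin N ⊕ Fin N),
      Finset.univ.map e = T ∧ ∀ j, e j = if j ∈ A then Sum.inl j else Sum.inr (τ j) := by
  classical
  let A := T.toLeft
  let B := T.toRight
  have hAB : A.card + B.card = N := Finset.card_toLeft_add_card_toRight.trans hT
  have hc : Fintype.card {x // x ∉ A} = Fintype.card {x // x ∈ B} := by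
    simp only [Fintype.card_subtype_compl, Fintype.card_coe, Fintype.card_fin]
    omega
  let a : {x // x ∉ A} ≃ {x // x ∈ B} := Fintype.equivOfCardEq hc
  let τ := a.extendSubtype
  let e : Fin N ↪ Fin N ⊕ Fin N := ⟨fun j => if j ∈ A then Sum.inl j else Sum.inr (τ j), by
    intro i j hij
    by_cases hi : i ∈ A <;> by_cases hj : j ∈ A <;> simp_all⟩
  refine ⟨A, τ, e, ?_, fun j => rfl⟩
  refine Finset.eq_of_subset_of_card_le ?_ (by simp [hT])
  intro y hy
  obtain ⟨j, -, rfl⟩ := Finset.mem_map.1 hy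
  by_cases hj : j ∈ A
  · have : e j = Sum.inl j := if_pos hj
    rw [this]
    exact Finset.mem_toLeft.1 hj
  · have : e j = Sum.inr (τ j) := if_neg hj
    rw [this]
    exact Finset.mem_toRight.1 (a.extendSubtype_mem j hj)

/-- The generator of an `m`-sum is a fixed linear combination of values of the `m`-sum at points
obtained by replacing some of the coordinates of `x` by coordinates of `t`. -/
lemma exists_generator_formula (Λ : Type*) (N m : ℕ) (hmN : m ≤ N) :
    ∃ (c : Finset (Fin N ⊕ Fin N) → ℝ) (A : Finset (Fin N ⊕ Fin N) → Finset (Fin N))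
      (τ : Finset (Fin N ⊕ Fin N) → Equiv.Perm (Fin N)),
      ∀ v : (Fin m → Λ) → ℝ, IsSymm' m v → ∀ x t : Fin N → Λ,
        v (firstCoords hmN x) =
          ∑ T, c T * mSum N m v ((A T).piecewise x (t ∘ τ T)) := by
  classical
  let e₀ : Fin m ↪ Fin N ⊕ Fin N := (Fin.castLEEmb hmN).trans Function.Embedding.inl
  obtain ⟨c, hc⟩ := exists_coeff_powersetCard (ι := Fin N ⊕ Fin N) N m hmN
    (by simp; omega) (Finset.univ.map e₀) (by simp)
  choose A τ e he using fun T : {T : Finset (Fin N ⊕ Fin N) // T.card = N} =>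
    exists_transversal T.1 T.2
  refine ⟨fun T => if T.card = N then c T else 0,
    fun T => if h : T.card = N then A ⟨T, h⟩ else ∅,
    fun T => if h : T.card = N then τ ⟨T, h⟩ else 1, fun v hv x t => ?_⟩
  have h1 := hc (evalFinset v (Sum.elim x t))
  rw [evalFinset_map hv] at h1
  have h2 : Sum.elim x t ∘ e₀ = firstCoords hmN x := by
    funext i; simp [e₀, firstCoords]
  rw [h2] at h1
  rw [h1, ← Finset.sum_subset (Finset.subset_univ (Finset.powersetCard N Finset.univ))]
  · refine Finset.sum_congr rfl fun T hT => ?_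
    have h : T.card = N := (Finset.mem_powersetCard.1 hT).2
    have h3 := mSum_comp_eq_sum_evalFinset hv (Sum.elim x t) (e ⟨T, h⟩)
    rw [(he ⟨T, h⟩).1] at h3
    simp only [h, if_true, dif_pos]
    rw [← h3]
    congr 2
    funext j
    simp only [Function.comp_apply, (he ⟨T, h⟩).2 j, Finset.piecewise]
    split_ifs <;> simp
  · intro T _ hT
    have h : T.card ≠ N := fun h' => hT (by simp [Finset.mem_powersetCard, h'])
    simp [h]


lemma exp_neg_integral_le {Ω : Type*} [MeasurableSpace Ω] {Q : Measure Ω} [IsProbabilityMeasure Q]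
    {q : Ω → ℝ} (hq : Integrable q Q) (he : Integrable (fun x => exp (-q x)) Q) :
    exp (-∫ x, q x ∂Q) ≤ ∫ x, exp (-q x) ∂Q := by
  set a := ∫ x, q x ∂Q with ha
  have h1 : ∫ x, exp (-a) * (1 + a - q x) ∂Q = exp (-a) := by
    rw [integral_const_mul, integral_sub (integrable_const _) hq]
    simp [← ha]
  rw [← h1]
  refine integral_mono ((((integrable_const _).sub hq)).const_mul _) he fun x => ?_
  have h2 : exp (-q x) = exp (-a) * exp (a - q x) := by rw [← exp_add]; ring_nf
  simp only [h2]
  have := add_one_le_exp (a - q x)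
  gcongr
  linarith

lemma integrable_of_max_zero_of_exp {Ω : Type*} [MeasurableSpace Ω] {Q : Measure Ω}
    [IsProbabilityMeasure Q] {H V : Ω → ℝ} (hH : AEStronglyMeasurable H Q)
    (hHp : Integrable (fun x => max (H x) 0) Q)
    (hV : Integrable V Q) (he : Integrable (fun x => exp (-V x - H x)) Q) : Integrable H Q := by
  refine (hHp.add ((hV.add he).abs.add (integrable_const (1 : ℝ)))).mono' hH (ae_of_all _ fun x => ?_)
  have h1 := add_one_le_exp (-V x - H x)
  have h2 := le_abs_self (V x + exp (-V x - H x))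
  have h3 := le_max_left (H x) 0
  have h4 := le_max_right (H x) 0
  have h5 := abs_nonneg (V x + exp (-V x - H x))
  simp only [Pi.add_apply, norm_eq_abs]
  rw [abs_le]
  constructor <;> linarith

/-- The functional `V ↦ ∫ V dQ + log ∫ e^{-V-H} dQ`. -/
noncomputable def freeEnergy {Ω : Type*} [MeasurableSpace Ω] (Q : Measure Ω) (H V : Ω → ℝ) : ℝ :=
  ∫ x, V x ∂Q + log (∫ x, exp (-V x - H x) ∂Q)

lemma freeEnergy_add_const {Ω : Type*} [MeasurableSpace Ω] {Q : Measure Ω} [IsProbabilityMeasure Q]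
    {H V : Ω → ℝ} (hV : Integrable V Q) (hZ : 0 < ∫ x, exp (-V x - H x) ∂Q) (c : ℝ) :
    freeEnergy Q H (fun x => V x + c) = freeEnergy Q H V := by
  unfold freeEnergy
  have h1 : ∀ x, exp (-(V x + c) - H x) = exp (-c) * exp (-V x - H x) := fun x => by
    rw [← exp_add]; ring_nf
  simp only [h1]
  rw [integral_const_mul, log_mul (exp_pos _).ne' hZ.ne', log_exp,
    integral_add hV (integrable_const _)]
  simp

/-- The nonnegative integrand `q - 1 + e^{-q}`, `q = V + H`. -/
noncomputable def entropyIntegrand {Ω : Type*} (H V : Ω → ℝ) (x : Ω) : ℝ :=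
  V x + H x - 1 + exp (-V x - H x)

lemma entropyIntegrand_nonneg {Ω : Type*} (H V : Ω → ℝ) (x : Ω) : 0 ≤ entropyIntegrand H V x := by
  have := add_one_le_exp (-V x - H x)
  simp only [entropyIntegrand]
  linarith

lemma integrable_entropyIntegrand {Ω : Type*} [MeasurableSpace Ω] {Q : Measure Ω}
    [IsProbabilityMeasure Q] {H V : Ω → ℝ} (hH : Integrable H Q) (hV : Integrable V Q)
    (he : Integrable (fun x => exp (-V x - H x)) Q) : Integrable (entropyIntegrand H V) Q :=
  ((hV.add hH).sub (integrable_const _)).add he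

lemma integral_entropyIntegrand {Ω : Type*} [MeasurableSpace Ω] {Q : Measure Ω}
    [IsProbabilityMeasure Q] {H V : Ω → ℝ} (hH : Integrable H Q) (hV : Integrable V Q)
    (he : Integrable (fun x => exp (-V x - H x)) Q) :
    ∫ x, entropyIntegrand H V x ∂Q
      = ∫ x, V x ∂Q + ∫ x, H x ∂Q - 1 + ∫ x, exp (-V x - H x) ∂Q := by
  have hVH : Integrable (fun x => V x + H x) Q := hV.add hH
  have hVH1 : Integrable (fun x => V x + H x - 1) Q := hVH.sub (integrable_const _)
  simp only [entropyIntegrand]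
  rw [integral_add hVH1 he, integral_sub hVH (integrable_const _), integral_add hV hH]
  simp

/-- Fast minimizing sequences of the free energy converge almost everywhere. -/
lemma ae_tendsto_of_minimizing {Ω : Type*} [MeasurableSpace Ω] {Q : Measure Ω}
    [IsProbabilityMeasure Q] {H : Ω → ℝ} (hH : Integrable H Q) {V : ℕ → Ω → ℝ} {I : ℝ}
    (hV : ∀ n, Integrable (V n) Q) (he : ∀ n, Integrable (fun x => exp (-V n x - H x)) Q)
    (hZ : ∀ n, ∫ x, exp (-V n x - H x) ∂Q = 1)
    (hmid : ∀ n k, I ≤ freeEnergy Q H fun x => (V n x + V k x) / 2)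
    (hmin : ∀ n, ∫ x, V n x ∂Q ≤ I + (1 / 16) ^ (n + 1)) :
    ∀ᵐ x ∂Q, ∃ l, Tendsto (fun n => V n x) atTop (nhds l) := by
  let f : ℕ → Ω → ℝ := fun n x => exp ((-V n x - H x) / 2)
  have hfm : ∀ n, AEStronglyMeasurable (f n) Q := fun n =>
    continuous_exp.comp_aestronglyMeasurable
      (((hV n).neg.sub hH).1.mul_const (1/2)) |>.congr (ae_of_all _ fun x => by
        simp [f, div_eq_mul_inv])
  have hcross : ∀ n k, Integrable (fun x => f n x * f k x) Q := by
    intro n k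
    refine ((he n).add (he k)).mono' ((hfm n).mul (hfm k)) (ae_of_all _ fun x => ?_)
    have e1 : exp (-V n x - H x) = f n x ^ 2 := by
      simp only [f]; rw [← exp_nat_mul]; push_cast; ring_nf
    have e2 : exp (-V k x - H x) = f k x ^ 2 := by
      simp only [f]; rw [← exp_nat_mul]; push_cast; ring_nf
    simp only [Pi.add_apply, e1, e2, norm_eq_abs, abs_mul]
    rw [abs_of_pos (exp_pos _), abs_of_pos (exp_pos _)]
    change f n x * f k x ≤ _
    nlinarith [sq_nonneg (f n x - f k x), sq_nonneg (f n x), sq_nonneg (f k x)]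
  have hsq : ∀ n x, exp (-V n x - H x) = f n x ^ 2 := fun n x => by
    simp only [f]; rw [← exp_nat_mul]; push_cast; ring_nf
  have hprod : ∀ n k x, exp (-((V n x + V k x) / 2) - H x) = f n x * f k x := fun n k x => by
    simp only [f]; rw [← exp_add]; ring_nf
  have hdist : ∀ M n k, M ≤ n → M ≤ k →
      ∫ x, (f n x - f k x) ^ 2 ∂Q ≤ 2 * (1 / 16) ^ (M + 1) := by
    intro M n k hn hk
    have h1 := hmid n k
    unfold freeEnergy at h1
    simp only [hprod] at h1
    have h2 : ∫ x, (V n x + V k x) / 2 ∂Q = (∫ x, V n x ∂Q + ∫ x, V k x ∂Q) / 2 := by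
      rw [integral_div, integral_add (hV n) (hV k)]
    have hpos : 0 < ∫ x, f n x * f k x ∂Q := by
      have := integral_exp_pos (μ := Q) (f := fun x => -((V n x + V k x) / 2) - H x)
        (by simpa only [hprod] using hcross n k)
      simpa only [hprod] using this
    have h3 := log_le_sub_one_of_pos hpos
    have h4 : ∀ j, M ≤ j → ∫ x, V j x ∂Q ≤ I + (1 / 16) ^ (M + 1) := fun j hj =>
      (hmin j).trans (by
        have : ((1:ℝ) / 16) ^ (j + 1) ≤ (1 / 16) ^ (M + 1) :=
          pow_le_pow_of_le_one (by norm_num) (by norm_num) (by omega)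
        linarith)
    have h5 := h4 n hn
    have h6 := h4 k hk
    have h7 : ∫ x, (f n x - f k x) ^ 2 ∂Q
        = ∫ x, exp (-V n x - H x) ∂Q + ∫ x, exp (-V k x - H x) ∂Q
          - 2 * ∫ x, f n x * f k x ∂Q := by
      rw [← integral_const_mul, ← integral_add (he n) (he k), ← integral_sub]
      · refine integral_congr_ae (ae_of_all _ fun x => ?_)
        simp only [hsq]; ring
      · exact (he n).add (he k)
      · exact (hcross n k).const_mul 2
    rw [h7, hZ, hZ]
    linarith
  have hsqi : ∀ n k, Integrable (fun x => (f n x - f k x) ^ 2) Q := by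
    intro n k
    refine (((he n).add (he k)).sub ((hcross n k).const_mul 2)).congr (ae_of_all _ fun x => ?_)
    simp only [Pi.sub_apply, Pi.add_apply, hsq]; ring
  have hL1 : ∀ M n k, M ≤ n → M ≤ k →
      eLpNorm (f n - f k) 1 Q < ENNReal.ofReal (2 * (1 / 4) ^ (M + 1)) := by
    intro M n k hn hk
    have hb : ∀ x, ‖f n x - f k x‖ ≤
        (4 ^ (M + 1)) * (f n x - f k x) ^ 2 / 2 + (1 / 4) ^ (M + 1) / 2 := by
      intro x
      rw [norm_eq_abs]
      set d := |f n x - f k x|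
      have hd : (f n x - f k x) ^ 2 = d ^ 2 := (sq_abs _).symm
      rw [hd]
      have h4 : (4:ℝ) ^ (M + 1) * (1 / 4) ^ (M + 1) = 1 := by
        rw [← mul_pow]; norm_num
      have h4' : (0:ℝ) < (1 / 4) ^ (M + 1) := by positivity
      have h4'' : (0:ℝ) < 4 ^ (M + 1) := by positivity
      set a := (4:ℝ) ^ (M + 1)
      set b := ((1:ℝ) / 4) ^ (M + 1)
      have : 0 ≤ a * (d - b) ^ 2 := by positivity
      have e : a * (d - b) ^ 2 = a * d ^ 2 - 2 * d * (a * b) + (a * b) * b := by ring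
      rw [e, h4] at this
      linarith
    have hbi : Integrable (fun x =>
        (4 ^ (M + 1)) * (f n x - f k x) ^ 2 / 2 + (1 / 4) ^ (M + 1) / 2) Q :=
      (((hsqi n k).const_mul _).div_const _).add (integrable_const _)
    have hdi : Integrable (fun x => f n x - f k x) Q :=
      hbi.mono' ((hfm n).sub (hfm k)) (ae_of_all _ hb)
    rw [eLpNorm_one_eq_lintegral_enorm]
    change ∫⁻ x, ‖f n x - f k x‖ₑ ∂Q < _
    rw [← ofReal_integral_norm_eq_lintegral_enorm hdi]
    rw [ENNReal.ofReal_lt_ofReal_iff (by positivity)]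
    refine (integral_mono hdi.norm hbi hb).trans_lt ?_
    rw [integral_add (((hsqi n k).const_mul _).div_const _) (integrable_const _), integral_div,
      integral_const_mul]
    simp only [integral_const, probReal_univ, smul_eq_mul, one_mul]
    have h8 : (4:ℝ) ^ (M + 1) * (1 / 16) ^ (M + 1) = (1 / 4) ^ (M + 1) := by
      rw [← mul_pow]; norm_num
    have h9 : (4:ℝ) ^ (M + 1) * ∫ x, (f n x - f k x) ^ 2 ∂Q
        ≤ 4 ^ (M + 1) * (2 * (1 / 16) ^ (M + 1)) := by
      gcongr
      exact hdist M n k hn hk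
    have h4' : (0:ℝ) < (1 / 4) ^ (M + 1) := by positivity
    nlinarith
  have hconv := Lp.ae_tendsto_of_cauchy_eLpNorm hfm le_rfl
    (B := fun M => ENNReal.ofReal (2 * (1 / 4) ^ (M + 1))) (by
      have hs : Summable fun M : ℕ => (2:ℝ) * (1 / 4) ^ (M + 1) := by
        have := (summable_geometric_of_lt_one (r := (1:ℝ)/4) (by norm_num) (by norm_num))
        exact ((summable_nat_add_iff 1).2 this).mul_left 2
      exact hs.tsum_ofReal_ne_top) (fun M n k hn hk => hL1 M n k hn hk)
  -- the limit of `f n` does not vanish, by Fatou's lemma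
  let φ : ℕ → Ω → ℝ := fun n => entropyIntegrand H (V n)
  have hφi : ∀ n, Integrable (φ n) Q := fun n => integrable_entropyIntegrand hH (hV n) (he n)
  have hφ0 : ∀ n x, 0 ≤ φ n x := fun n x => entropyIntegrand_nonneg _ _ _
  have hφint : ∀ n, ∫⁻ x, ENNReal.ofReal (φ n x) ∂Q ≤ ENNReal.ofReal (I + 1 + ∫ x, H x ∂Q) := by
    intro n
    rw [← ofReal_integral_eq_lintegral_ofReal (hφi n) (ae_of_all _ (hφ0 n)),
      integral_entropyIntegrand hH (hV n) (he n), hZ]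
    apply ENNReal.ofReal_le_ofReal
    have h1 := hmin n
    have h2 : ((1:ℝ) / 16) ^ (n + 1) ≤ 1 := pow_le_one₀ (by norm_num) (by norm_num)
    linarith
  have hfat : ∫⁻ x, liminf (fun n => ENNReal.ofReal (φ n x)) atTop ∂Q
      ≤ ENNReal.ofReal (I + 1 + ∫ x, H x ∂Q) := by
    refine (lintegral_liminf_le' fun n => (hφi n).1.aemeasurable.ennreal_ofReal).trans ?_
    exact liminf_le_of_le (by isBoundedDefault) fun b hb => by
      obtain ⟨n, hn⟩ := hb.exists
      exact hn.trans (hφint n)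
  have hfin : ∀ᵐ x ∂Q, liminf (fun n => ENNReal.ofReal (φ n x)) atTop < ∞ :=
    ae_lt_top' (by
      simp only [liminf_eq_iSup_iInf_of_nat]
      exact AEMeasurable.iSup fun n => AEMeasurable.biInf _ (Set.to_countable _) fun i _ =>
        (hφi i).1.aemeasurable.ennreal_ofReal) (hfat.trans_lt ENNReal.ofReal_lt_top).ne
  filter_upwards [hconv, hfin] with x ⟨l, hl⟩ hx
  have hl0 : 0 ≤ l := ge_of_tendsto' hl fun n => (exp_pos _).le
  have hVf : ∀ n, V n x = -2 * log (f n x) - H x := fun n => by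
    simp only [f, log_exp]; ring
  rcases hl0.eq_or_lt with h0 | h0
  · exfalso
    have h1 : Tendsto (fun n => log (f n x)) atTop atBot := by
      refine tendsto_log_nhdsGT_zero.comp (tendsto_nhdsWithin_iff.2 ⟨h0 ▸ hl, ?_⟩)
      exact Eventually.of_forall fun n => exp_pos _
    have h2 : Tendsto (fun n => -2 * log (f n x) - 1) atTop atTop :=
      tendsto_atTop_add_const_right _ _ (h1.const_mul_atBot_of_neg (by norm_num))
    have h3 : Tendsto (fun n => φ n x) atTop atTop := by
      refine tendsto_atTop_mono (fun n => ?_) h2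
      have := exp_pos (-V n x - H x)
      simp only [φ, entropyIntegrand]
      linarith [hVf n]
    exact hx.ne (ENNReal.tendsto_ofReal_atTop.comp h3).liminf_eq
  · refine ⟨-2 * log l - H x, ?_⟩
    simp only [hVf]
    exact ((hl.log h0.ne').const_mul _).sub_const _

/-- Existence of a minimizer of the free energy in a class of functions which is stable under
adding constants, taking midpoints, and almost everywhere limits. -/
lemma exists_freeEnergy_minimizer {Ω : Type*} [MeasurableSpace Ω] {Q : Measure Ω}
    [IsProbabilityMeasure Q] {H : Ω → ℝ} (hHm : AEStronglyMeasurable H Q)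
    (hHp : Integrable (fun x => max (H x) 0) Q) (S : Set (Ω → ℝ))
    (hconst : ∀ V ∈ S, ∀ c : ℝ, (fun x => V x + c) ∈ S)
    (hmid : ∀ V ∈ S, ∀ V' ∈ S, (fun x => (V x + V' x) / 2) ∈ S)
    (hlim : ∀ V : ℕ → Ω → ℝ, (∀ n, V n ∈ S) →
      (∀ᵐ x ∂Q, ∃ l, Tendsto (fun n => V n x) atTop (nhds l)) →
      ∃ U ∈ S, ∀ᵐ x ∂Q, Tendsto (fun n => V n x) atTop (nhds (U x)))
    (hne : ∃ V ∈ S, Integrable V Q ∧ Integrable (fun x => exp (-V x - H x)) Q) :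
    ∃ U ∈ S, Integrable U Q ∧ Integrable (fun x => exp (-U x - H x)) Q ∧
      ∀ V ∈ S, Integrable V Q → Integrable (fun x => exp (-V x - H x)) Q →
        freeEnergy Q H U ≤ freeEnergy Q H V := by
  obtain ⟨V₀, hV₀S, hV₀, he₀⟩ := hne
  have hH : Integrable H Q := integrable_of_max_zero_of_exp hHm hHp hV₀ he₀
  let D : Set (Ω → ℝ) := {V | V ∈ S ∧ Integrable V Q ∧ Integrable (fun x => exp (-V x - H x)) Q}
  have hZpos : ∀ V ∈ D, 0 < ∫ x, exp (-V x - H x) ∂Q := fun V hV => integral_exp_pos hV.2.2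
  have hbelow : ∀ V ∈ D, -∫ x, H x ∂Q ≤ freeEnergy Q H V := by
    intro V hV
    have h1 := exp_neg_integral_le (hV.2.1.add hH) (by
      refine hV.2.2.congr (ae_of_all _ fun x => ?_)
      simp only [Pi.add_apply]; ring_nf)
    have h2 : ∀ x, -(V + H) x = -V x - H x := fun x => by simp only [Pi.add_apply]; ring
    simp only [h2] at h1
    have h3 := log_le_log (exp_pos _) h1
    rw [log_exp] at h3
    have h4 : ∫ x, (V + H) x ∂Q = ∫ x, V x ∂Q + ∫ x, H x ∂Q := integral_add hV.2.1 hH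
    unfold freeEnergy
    linarith
  set I := sInf (freeEnergy Q H '' D) with hI
  have hbdd : BddBelow (freeEnergy Q H '' D) := ⟨-∫ x, H x ∂Q, by
    rintro _ ⟨V, hV, rfl⟩; exact hbelow V hV⟩
  have hIle : ∀ V ∈ D, I ≤ freeEnergy Q H V := fun V hV => csInf_le hbdd ⟨V, hV, rfl⟩
  have hseq : ∀ n : ℕ, ∃ V ∈ D, ∫ x, exp (-V x - H x) ∂Q = 1 ∧
      ∫ x, V x ∂Q ≤ I + (1 / 16) ^ (n + 1) := by
    intro n
    obtain ⟨_, ⟨V, hV, rfl⟩, hlt⟩ := exists_lt_of_csInf_lt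
      (s := freeEnergy Q H '' D) (b := I + (1 / 16) ^ (n + 1)) ⟨_, V₀, ⟨hV₀S, hV₀, he₀⟩, rfl⟩
      (by rw [← hI]; have : (0:ℝ) < (1 / 16) ^ (n + 1) := by positivity
          linarith)
    set c := log (∫ x, exp (-V x - H x) ∂Q) with hc
    have h1 : ∀ x, exp (-(V x + c) - H x) = exp (-c) * exp (-V x - H x) := fun x => by
      rw [← exp_add]; ring_nf
    have h2 : ∫ x, exp (-(V x + c) - H x) ∂Q = 1 := by
      simp only [h1]
      rw [integral_const_mul, exp_neg, hc, exp_log (hZpos V hV), inv_mul_cancel₀ (hZpos V hV).ne']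
    refine ⟨fun x => V x + c, ⟨hconst V hV.1 c, hV.2.1.add (integrable_const _), ?_⟩, h2, ?_⟩
    · simp only [h1]; exact hV.2.2.const_mul _
    · have h3 := freeEnergy_add_const hV.2.1 (hZpos V hV) c
      rw [← h3] at hlt
      unfold freeEnergy at hlt
      rw [h2, log_one, add_zero] at hlt
      exact hlt.le
  choose V hVD hZ hmin using hseq
  have hmidD : ∀ n k, (fun x => (V n x + V k x) / 2) ∈ D := by
    intro n k
    refine ⟨hmid _ (hVD n).1 _ (hVD k).1, ((hVD n).2.1.add (hVD k).2.1).div_const 2, ?_⟩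
    refine ((hVD n).2.2.add (hVD k).2.2).mono' ?_ (ae_of_all _ fun x => ?_)
    · exact continuous_exp.comp_aestronglyMeasurable
        ((((hVD n).2.1.add (hVD k).2.1).div_const 2).neg.sub hH).1
    · simp only [Pi.add_apply, norm_eq_abs, abs_exp]
      rcases le_total (V n x) (V k x) with h | h
      · have := exp_le_exp.2 (show -((V n x + V k x) / 2) - H x ≤ -V n x - H x by linarith)
        linarith [exp_pos (-V k x - H x)]
      · have := exp_le_exp.2 (show -((V n x + V k x) / 2) - H x ≤ -V k x - H x by linarith)
        linarith [exp_pos (-V n x - H x)]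
  obtain ⟨U, hUS, hU⟩ := hlim V (fun n => (hVD n).1) (ae_tendsto_of_minimizing hH
    (fun n => (hVD n).2.1) (fun n => (hVD n).2.2) hZ (fun n k => hIle _ (hmidD n k)) hmin)
  have hUm : AEStronglyMeasurable U Q :=
    aestronglyMeasurable_of_tendsto_ae atTop (fun n => (hVD n).2.1.1) hU
  have heU : AEStronglyMeasurable (fun x => exp (-U x - H x)) Q :=
    continuous_exp.comp_aestronglyMeasurable (hUm.neg.sub hHm)
  have hetend : ∀ᵐ x ∂Q, Tendsto (fun n => exp (-V n x - H x)) atTop (nhds (exp (-U x - H x))) := by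
    filter_upwards [hU] with x hx
    exact (continuous_exp.tendsto _).comp (hx.neg.sub_const _)
  have hUe : Integrable (fun x => exp (-U x - H x)) Q := by
    refine ⟨heU, ?_⟩
    refine (hasFiniteIntegral_iff_ofReal (ae_of_all _ fun x => (exp_pos _).le)).2 ?_
    refine lt_of_le_of_lt (b := 1) ?_ ENNReal.one_lt_top
    calc ∫⁻ x, ENNReal.ofReal (exp (-U x - H x)) ∂Q
        = ∫⁻ x, liminf (fun n => ENNReal.ofReal (exp (-V n x - H x))) atTop ∂Q := by
          refine lintegral_congr_ae ?_
          filter_upwards [hetend] with x hx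
          exact (((ENNReal.continuous_ofReal.tendsto _).comp hx).liminf_eq).symm
      _ ≤ liminf (fun n => ∫⁻ x, ENNReal.ofReal (exp (-V n x - H x)) ∂Q) atTop :=
          lintegral_liminf_le' fun n => (hVD n).2.2.1.aemeasurable.ennreal_ofReal
      _ ≤ 1 := by
          have : ∀ n, ∫⁻ x, ENNReal.ofReal (exp (-V n x - H x)) ∂Q = 1 := fun n => by
            rw [← ofReal_integral_eq_lintegral_ofReal (hVD n).2.2
              (ae_of_all _ fun x => (exp_pos _).le), hZ, ENNReal.ofReal_one]
          simp [this]
  let φ : (Ω → ℝ) → Ω → ℝ := entropyIntegrand H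
  have hφ0 : ∀ V x, 0 ≤ φ V x := entropyIntegrand_nonneg H
  have hφV : ∀ n, ∫⁻ x, ENNReal.ofReal (φ (V n) x) ∂Q
      ≤ ENNReal.ofReal (I + (1 / 16) ^ (n + 1) + ∫ x, H x ∂Q) := by
    intro n
    have hi1 := (hVD n).2.1
    have hi2 := (hVD n).2.2
    rw [← ofReal_integral_eq_lintegral_ofReal (integrable_entropyIntegrand hH hi1 hi2)
      (ae_of_all _ (hφ0 _)), integral_entropyIntegrand hH hi1 hi2, hZ]
    apply ENNReal.ofReal_le_ofReal
    have h1 := hmin n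
    linarith
  have hφU : ∫⁻ x, ENNReal.ofReal (φ U x) ∂Q ≤ ENNReal.ofReal (I + ∫ x, H x ∂Q) := by
    calc ∫⁻ x, ENNReal.ofReal (φ U x) ∂Q
        = ∫⁻ x, liminf (fun n => ENNReal.ofReal (φ (V n) x)) atTop ∂Q := by
          refine lintegral_congr_ae ?_
          filter_upwards [hU, hetend] with x hx hx'
          exact (((ENNReal.continuous_ofReal.tendsto _).comp
            (((hx.add_const _).sub_const _).add hx')).liminf_eq).symm
      _ ≤ liminf (fun n => ∫⁻ x, ENNReal.ofReal (φ (V n) x) ∂Q) atTop :=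
          lintegral_liminf_le' fun n =>
            (integrable_entropyIntegrand hH (hVD n).2.1 (hVD n).2.2).1.aemeasurable.ennreal_ofReal
      _ ≤ liminf (fun n : ℕ => ENNReal.ofReal (I + (1 / 16) ^ (n + 1) + ∫ x, H x ∂Q)) atTop :=
          liminf_le_liminf (Eventually.of_forall hφV)
      _ = ENNReal.ofReal (I + ∫ x, H x ∂Q) := by
          refine Tendsto.liminf_eq ?_
          have h1 : Tendsto (fun n : ℕ => ((1:ℝ) / 16) ^ (n + 1)) atTop (nhds 0) :=
            (tendsto_add_atTop_iff_nat 1).2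
              (tendsto_pow_atTop_nhds_zero_of_lt_one (by norm_num) (by norm_num))
          have h2 := (ENNReal.continuous_ofReal.tendsto _).comp
            ((h1.const_add I).add_const (∫ x, H x ∂Q))
          rw [add_zero] at h2
          exact h2
  have hφUi : Integrable (φ U) Q :=
    ⟨((hUm.add hHm).sub aestronglyMeasurable_const).add heU,
      (hasFiniteIntegral_iff_ofReal (ae_of_all _ (hφ0 U))).2
        (hφU.trans_lt ENNReal.ofReal_lt_top)⟩
  have hUi : Integrable U Q := by
    refine (((hφUi.sub hUe).add (integrable_const 1)).sub hH).congr (ae_of_all _ fun x => ?_)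
    simp [φ, entropyIntegrand]
  refine ⟨U, hUS, hUi, hUe, fun V' hV'S hV' heV' => ?_⟩
  refine le_trans ?_ (hIle V' ⟨hV'S, hV', heV'⟩)
  have hIH : 0 ≤ I + ∫ x, H x ∂Q := by
    have : -∫ x, H x ∂Q ≤ I := le_csInf ⟨_, V₀, ⟨hV₀S, hV₀, he₀⟩, rfl⟩ (by
      rintro _ ⟨V, hV, rfl⟩; exact hbelow V hV)
    linarith
  rw [← ofReal_integral_eq_lintegral_ofReal hφUi (ae_of_all _ (hφ0 _)),
    ENNReal.ofReal_le_ofReal_iff hIH] at hφU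
  rw [integral_entropyIntegrand hH hUi hUe] at hφU
  have := log_le_sub_one_of_pos (integral_exp_pos hUe)
  unfold freeEnergy
  linarith

/-- The Euler–Lagrange equation at a minimizer of the free energy. -/
lemma integral_mul_exp_of_minimizer {Ω : Type*} [MeasurableSpace Ω] {Q : Measure Ω}
    [IsProbabilityMeasure Q] {H U w : Ω → ℝ} (hU : Integrable U Q)
    (he : Integrable (fun x => exp (-U x - H x)) Q) (hw : Measurable w) {K : ℝ}
    (hK : ∀ x, |w x| ≤ K)
    (hmin : ∀ ε : ℝ, Integrable (fun x => U x + ε * w x) Q →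
      Integrable (fun x => exp (-(U x + ε * w x) - H x)) Q →
      freeEnergy Q H U ≤ freeEnergy Q H fun x => U x + ε * w x) :
    ∫ x, w x * exp (-U x - H x) ∂Q = (∫ x, w x ∂Q) * ∫ x, exp (-U x - H x) ∂Q := by
  have hwi : Integrable w Q := (integrable_const K).mono' hw.aestronglyMeasurable
    (ae_of_all _ hK)
  have hwe : Integrable (fun x => w x * exp (-U x - H x)) Q :=
    he.bdd_mul hw.aestronglyMeasurable (ae_of_all _ hK)
  set Z := ∫ x, exp (-U x - H x) ∂Q with hZ
  have hZpos : 0 < Z := integral_exp_pos he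
  obtain ⟨x₀⟩ : Nonempty Ω := nonempty_of_isProbabilityMeasure Q
  have hK0 : 0 ≤ K := (abs_nonneg _).trans (hK x₀)
  have key : ∀ ε : ℝ, |ε| * K ≤ 1 →
      0 ≤ ε * ((∫ x, w x ∂Q) * Z - ∫ x, w x * exp (-U x - H x) ∂Q) + ε ^ 2 * (K ^ 2 * Z) := by
    intro ε hε
    have hsplit : ∀ x, exp (-(U x + ε * w x) - H x) = exp (-(ε * w x)) * exp (-U x - H x) :=
      fun x => by rw [← exp_add]; ring_nf
    have habs : ∀ x, |-(ε * w x)| ≤ 1 := fun x => by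
      rw [abs_neg, abs_mul]
      exact (mul_le_mul_of_nonneg_left (hK x) (abs_nonneg _)).trans hε
    have hei : Integrable (fun x => exp (-(U x + ε * w x) - H x)) Q := by
      simp only [hsplit]
      refine he.bdd_mul (c := exp 1) (by fun_prop) (ae_of_all _ fun x => ?_)
      rw [norm_eq_abs, abs_exp]
      exact exp_le_exp.2 ((le_abs_self _).trans (habs x))
    have h1 := hmin ε (hU.add (hwi.const_mul ε)) hei
    unfold freeEnergy at h1
    rw [integral_add hU (hwi.const_mul ε), integral_const_mul, ← hZ] at h1
    have h2 : ∫ x, exp (-(U x + ε * w x) - H x) ∂Q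
        ≤ Z - ε * ∫ x, w x * exp (-U x - H x) ∂Q + ε ^ 2 * K ^ 2 * Z := by
      have h3 : ∫ x, (exp (-U x - H x) - ε * (w x * exp (-U x - H x))
            + ε ^ 2 * K ^ 2 * exp (-U x - H x)) ∂Q
          = Z - ε * ∫ x, w x * exp (-U x - H x) ∂Q + ε ^ 2 * K ^ 2 * Z := by
        have hs : Integrable (fun x => exp (-U x - H x) - ε * (w x * exp (-U x - H x))) Q :=
          he.sub (hwe.const_mul ε)
        rw [integral_add hs (he.const_mul _),
          integral_sub he (hwe.const_mul ε), integral_const_mul, integral_const_mul]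
      rw [← h3]
      refine integral_mono hei ((he.sub (hwe.const_mul ε)).add (he.const_mul _)) fun x => ?_
      simp only [hsplit]
      have h4 := abs_exp_sub_one_sub_id_le (habs x)
      have h5 := (abs_le.1 h4).2
      have h6 : (-(ε * w x)) ^ 2 ≤ ε ^ 2 * K ^ 2 := by
        rw [neg_sq, mul_pow]
        have : w x ^ 2 ≤ K ^ 2 := sq_le_sq' (abs_le.1 (hK x)).1 (abs_le.1 (hK x)).2
        gcongr
      have h7 : exp (-(ε * w x)) ≤ 1 - ε * w x + ε ^ 2 * K ^ 2 := by linarith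
      have := mul_le_mul_of_nonneg_right h7 (exp_pos (-U x - H x)).le
      linarith
    have h3 : 0 < ∫ x, exp (-(U x + ε * w x) - H x) ∂Q := integral_exp_pos hei
    set Z' := ∫ x, exp (-(U x + ε * w x) - H x) ∂Q
    have h4 : log Z' - log Z ≤ Z' / Z - 1 := by
      rw [← log_div h3.ne' hZpos.ne']
      exact log_le_sub_one_of_pos (div_pos h3 hZpos)
    have h5 : 0 ≤ ε * ∫ x, w x ∂Q + (Z' / Z - 1) := by linarith
    have h6 : 0 ≤ (ε * ∫ x, w x ∂Q + (Z' / Z - 1)) * Z := mul_nonneg h5 hZpos.le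
    have h7 : (ε * ∫ x, w x ∂Q + (Z' / Z - 1)) * Z = ε * (∫ x, w x ∂Q) * Z + Z' - Z := by
      field_simp
      ring
    linarith
  set d := (∫ x, w x ∂Q) * Z - ∫ x, w x * exp (-U x - H x) ∂Q with hd
  have hd0 : d = 0 := by
    by_contra hne
    set M := K ^ 2 * Z with hM
    have hM0 : 0 ≤ M := by positivity
    -- test with `ε = -s d`
    obtain ⟨s, hs0, hs1, hs2⟩ : ∃ s : ℝ, 0 < s ∧ s * (|d| * K) ≤ 1 ∧ s * M < 1 := by
      refine ⟨1 / (|d| * K + M + 1), by positivity, ?_, ?_⟩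
      · rw [one_div_mul_eq_div, div_le_one (by positivity)]; linarith
      · have : 0 ≤ |d| * K := by positivity
        rw [one_div_mul_eq_div, div_lt_one (by positivity)]; linarith
    have h1 := key (-(s * d)) (by rw [abs_neg, abs_mul, abs_of_pos hs0, mul_assoc]; exact hs1)
    have h2 : 0 < s * d ^ 2 := by positivity
    have h3 : -(s * d) * d + (-(s * d)) ^ 2 * M = (s * d ^ 2) * (s * M - 1) := by ring
    rw [h3] at h1
    nlinarith
  linarith

instance pm.instSigmaFinite (μ : Measure Λ) [SigmaFinite μ] (k : ℕ) : SigmaFinite (pm μ k) := by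
  unfold pm; infer_instance

lemma glue_castLE {Λ : Type*} {N m : ℕ} (h : m ≤ N) (y : Fin m → Λ) (z : Fin (N - m) → Λ)
    (i : Fin m) : glue h y z (Fin.castLE h i) = y i := by
  have : Fin.cast (by omega : N = m + (N - m)) (Fin.castLE h i) = Fin.castAdd (N - m) i := by
    ext; simp
  rw [glue, this, Fin.append_left]

lemma firstCoords_glue {Λ : Type*} {N m : ℕ} (h : m ≤ N) (y : Fin m → Λ) (z : Fin (N - m) → Λ) :
    firstCoords h (glue h y z) = y :=
  funext fun i => glue_castLE h y z i

lemma measurable_firstCoords {N m : ℕ} (h : m ≤ N) :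
    Measurable (firstCoords h : (Fin N → Λ) → Fin m → Λ) :=
  measurable_pi_lambda _ fun _ => measurable_pi_apply _

lemma measurePreserving_glue (μ : Measure Λ) [SigmaFinite μ] {N m : ℕ} (h : m ≤ N) :
    MeasurePreserving (fun p : (Fin m → Λ) × (Fin (N - m) → Λ) => glue h p.1 p.2)
      ((pm μ m).prod (pm μ (N - m))) (pm μ N) := by
  have hc : m + (N - m) = N := by omega
  have hm : Measurable (fun p : (Fin m → Λ) × (Fin (N - m) → Λ) => glue h p.1 p.2) := by
    refine measurable_pi_lambda _ fun i => ?_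
    simp only [glue]
    induction Fin.cast hc.symm i using Fin.addCases with
    | left j => simp only [Fin.append_left]; fun_prop
    | right j => simp only [Fin.append_right]; fun_prop
  refine ⟨hm, (Measure.pi_eq fun s hs => ?_).symm⟩
  rw [Measure.map_apply hm (MeasurableSet.univ_pi hs)]
  have : (fun p : (Fin m → Λ) × (Fin (N - m) → Λ) => glue h p.1 p.2) ⁻¹' (Set.univ.pi s)
      = (Set.univ.pi fun i => s (Fin.cast hc (Fin.castAdd _ i))) ×ˢ
        (Set.univ.pi fun i => s (Fin.cast hc (Fin.natAdd _ i))) := by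
    ext p
    simp only [Set.mem_preimage, Set.mem_univ_pi, Set.mem_prod, glue]
    constructor
    · intro hp
      refine ⟨fun i => ?_, fun i => ?_⟩
      · simpa using hp (Fin.cast hc (Fin.castAdd _ i))
      · simpa using hp (Fin.cast hc (Fin.natAdd _ i))
    · rintro ⟨h1, h2⟩ i
      obtain ⟨j, rfl⟩ : ∃ j, i = Fin.cast hc j := ⟨Fin.cast hc.symm i, by simp⟩
      induction j using Fin.addCases with
      | left j => simpa using h1 j
      | right j => simpa using h2 j
  rw [this, Measure.prod_prod, pm, pm, Measure.pi_pi, Measure.pi_pi,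
    ← Fin.prod_congr' (fun i => μ (s i)) hc, Fin.prod_univ_add]

lemma measurePreserving_glueLast (μ : Measure Λ) [SigmaFinite μ] {N : ℕ} (h : 1 ≤ N) :
    MeasurePreserving (fun p : (Fin (N - 1) → Λ) × Λ => glueLast h p.1 p.2)
      ((pm μ (N - 1)).prod μ) (pm μ N) := by
  have hc : N - 1 + 1 = N := by omega
  have hm : Measurable (fun p : (Fin (N - 1) → Λ) × Λ => glueLast h p.1 p.2) := by
    refine measurable_pi_lambda _ fun i => ?_
    simp only [glueLast]
    induction Fin.cast hc.symm i using Fin.lastCases with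
    | last => simp only [Fin.snoc_last]; fun_prop
    | cast j => simp only [Fin.snoc_castSucc]; fun_prop
  refine ⟨hm, (Measure.pi_eq fun s hs => ?_).symm⟩
  rw [Measure.map_apply hm (MeasurableSet.univ_pi hs)]
  have : (fun p : (Fin (N - 1) → Λ) × Λ => glueLast h p.1 p.2) ⁻¹' (Set.univ.pi s)
      = (Set.univ.pi fun i => s (Fin.cast hc (Fin.castSucc i))) ×ˢ
        (s (Fin.cast hc (Fin.last _))) := by
    ext p
    simp only [Set.mem_preimage, Set.mem_univ_pi, Set.mem_prod, glueLast]
    constructor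
    · intro hp
      refine ⟨fun i => ?_, ?_⟩
      · simpa using hp (Fin.cast hc (Fin.castSucc i))
      · simpa using hp (Fin.cast hc (Fin.last _))
    · rintro ⟨h1, h2⟩ i
      obtain ⟨j, rfl⟩ : ∃ j, i = Fin.cast hc j := ⟨Fin.cast hc.symm i, by simp⟩
      induction j using Fin.lastCases with
      | last => simpa using h2
      | cast j => simpa using h1 j
  rw [this, Measure.prod_prod, pm, Measure.pi_pi,
    ← Fin.prod_congr' (fun i => μ (s i)) hc, Fin.prod_univ_castSucc]

lemma measurable_comp_right {ι κ : Type*} (e : κ → ι) :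
    Measurable fun x : ι → Λ => x ∘ e :=
  measurable_pi_lambda _ fun _ => measurable_pi_apply _

lemma measurePreserving_comp_perm (μ : Measure Λ) [SigmaFinite μ] {N : ℕ}
    (σ : Equiv.Perm (Fin N)) :
    MeasurePreserving (fun x : Fin N → Λ => x ∘ σ) (pm μ N) (pm μ N) := by
  refine ⟨measurable_comp_right σ, (Measure.pi_eq fun s hs => ?_).symm⟩
  rw [Measure.map_apply (measurable_comp_right σ) (MeasurableSet.univ_pi hs)]
  have : (fun x : Fin N → Λ => x ∘ σ) ⁻¹' (Set.univ.pi s) = Set.univ.pi fun i => s (σ.symm i) := by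
    ext x
    simp only [Set.mem_preimage, Set.mem_univ_pi, Function.comp_apply]
    exact ⟨fun hx i => by simpa using hx (σ.symm i), fun hx i => by simpa using hx (σ i)⟩
  rw [this, pm, Measure.pi_pi]
  exact Equiv.prod_comp σ.symm fun i => μ (s i)

/-- Invariance of a measure on `Λ^N` under permutations of the coordinates. -/
def PermInvariant {N : ℕ} (Q : Measure (Fin N → Λ)) : Prop :=
  ∀ σ : Equiv.Perm (Fin N), MeasurePreserving (fun x : Fin N → Λ => x ∘ σ) Q Q

lemma permInvariant_withDensity (μ : Measure Λ) [SigmaFinite μ] {N : ℕ}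
    {p : (Fin N → Λ) → ℝ≥0∞} (hp : Measurable p)
    (hs : ∀ σ : Equiv.Perm (Fin N), ∀ᵐ x ∂(pm μ N), p (x ∘ σ) = p x) :
    PermInvariant ((pm μ N).withDensity p) := by
  intro σ
  refine ⟨measurable_comp_right σ, Measure.ext fun E hE => ?_⟩
  rw [Measure.map_apply (measurable_comp_right σ) hE,
    withDensity_apply _ (measurable_comp_right σ hE), withDensity_apply _ hE,
    ← lintegral_indicator hE, ← lintegral_indicator (measurable_comp_right σ hE),
    ← (measurePreserving_comp_perm μ σ).lintegral_comp (hp.indicator hE)]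
  refine lintegral_congr_ae ?_
  filter_upwards [hs σ] with x hx
  simp only [Set.indicator, Set.mem_preimage, hx]
  rfl

lemma PermInvariant.measurePreserving_comp_embedding {N m : ℕ} {Q : Measure (Fin N → Λ)}
    (hQ : PermInvariant Q) (h : m ≤ N) (e : Fin m ↪ Fin N) :
    MeasurePreserving (fun x : Fin N → Λ => x ∘ e) Q (Q.map (firstCoords h)) := by
  obtain ⟨σ, hσ⟩ := exists_perm_extending h e
  have h1 : (fun x : Fin N → Λ => x ∘ e) = firstCoords h ∘ fun x => x ∘ σ := by
    funext x i
    simp [firstCoords, hσ]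
  rw [h1]
  exact (measurable_firstCoords h).measurePreserving Q |>.comp (hQ σ)

lemma mSum_eq_sum_attach {Λ : Type*} (N m : ℕ) (v : (Fin m → Λ) → ℝ) (x : Fin N → Λ) :
    mSum N m v x = ∑ s ∈ (Finset.powersetCard m (Finset.univ : Finset (Fin N))).attach,
      v (x ∘ (s.1.orderEmbOfFin (Finset.mem_powersetCard.1 s.2).2).toEmbedding) := by
  rw [mSum, ← Finset.sum_attach]
  refine Finset.sum_congr rfl fun s _ => ?_
  rw [dif_pos (Finset.mem_powersetCard.1 s.2).2]
  rfl

lemma measurable_mSum (N : ℕ) {m : ℕ} {v : (Fin m → Λ) → ℝ} (hv : Measurable v) :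
    Measurable (mSum N m v) := by
  have : mSum N m v = fun x => ∑ s ∈ (Finset.powersetCard m (Finset.univ : Finset (Fin N))).attach,
      v (x ∘ (s.1.orderEmbOfFin (Finset.mem_powersetCard.1 s.2).2).toEmbedding) :=
    funext (mSum_eq_sum_attach N m v)
  rw [this]
  exact Finset.measurable_sum _ fun s _ => hv.comp (measurable_comp_right _)

lemma mSum_comp_perm {Λ : Type*} {N m : ℕ} {v : (Fin m → Λ) → ℝ} (hv : IsSymm' m v)
    (σ : Equiv.Perm (Fin N)) (x : Fin N → Λ) : mSum N m v (x ∘ σ) = mSum N m v x := by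
  have h1 := mSum_comp_eq_sum_evalFinset hv x σ.toEmbedding
  have h2 := mSum_comp_eq_sum_evalFinset hv x (Function.Embedding.refl (Fin N))
  simp only [Finset.map_univ_equiv, Finset.map_refl] at h1 h2
  exact h1.trans h2.symm

lemma mSum_linear {Λ : Type*} (N m : ℕ) (a b : ℝ) (v w : (Fin m → Λ) → ℝ) (x : Fin N → Λ) :
    mSum N m (fun y => a * v y + b * w y) x = a * mSum N m v x + b * mSum N m w x := by
  simp only [mSum_eq_sum_attach, Finset.mul_sum, ← Finset.sum_add_distrib]

lemma mSum_const {Λ : Type*} (N m : ℕ) (c : ℝ) (x : Fin N → Λ) :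
    mSum N m (fun _ => c) x = (N.choose m : ℝ) * c := by
  simp [mSum_eq_sum_attach]

lemma PermInvariant.integrable_mSum {N m : ℕ} {Q : Measure (Fin N → Λ)} (hQ : PermInvariant Q)
    (h : m ≤ N) {v : (Fin m → Λ) → ℝ} (hv : Integrable v (Q.map (firstCoords h))) :
    Integrable (mSum N m v) Q := by
  have : mSum N m v = fun x => ∑ s ∈ (Finset.powersetCard m (Finset.univ : Finset (Fin N))).attach,
      v (x ∘ (s.1.orderEmbOfFin (Finset.mem_powersetCard.1 s.2).2).toEmbedding) :=
    funext (mSum_eq_sum_attach N m v)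
  rw [this]
  exact integrable_finsetSum _ fun s _ =>
    (hQ.measurePreserving_comp_embedding h _).integrable_comp_of_integrable hv

lemma PermInvariant.integral_mSum {N m : ℕ} {Q : Measure (Fin N → Λ)} (hQ : PermInvariant Q)
    (h : m ≤ N) {v : (Fin m → Λ) → ℝ} (hv : Integrable v (Q.map (firstCoords h))) :
    ∫ x, mSum N m v x ∂Q = (N.choose m : ℝ) * ∫ y, v y ∂(Q.map (firstCoords h)) := by
  simp only [mSum_eq_sum_attach]
  have hi : ∀ e : Fin m ↪ Fin N, Integrable (fun x => v (x ∘ e)) Q := fun e =>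
    (hQ.measurePreserving_comp_embedding h e).integrable_comp_of_integrable hv
  rw [integral_finsetSum _ fun s _ => hi _]
  have : ∀ e : Fin m ↪ Fin N, ∫ x, v (x ∘ e) ∂Q = ∫ y, v y ∂(Q.map (firstCoords h)) := by
    intro e
    have he := hQ.measurePreserving_comp_embedding h e
    rw [← he.map_eq, integral_map he.measurable.aemeasurable (by rw [he.map_eq]; exact hv.1)]
  rw [Finset.sum_congr rfl fun s _ => this _]
  simp

lemma map_firstCoords_withDensity (μ : Measure Λ) [SigmaFinite μ] {N m : ℕ} (h : m ≤ N)
    {p : (Fin N → Λ) → ℝ} (hp : Measurable p) (hpi : Integrable p (pm μ N))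
    (hp0 : ∀ᵐ x ∂(pm μ N), 0 ≤ p x) :
    ((pm μ N).withDensity fun x => ENNReal.ofReal (p x)).map (firstCoords h)
      = (pm μ m).withDensity fun y => ENNReal.ofReal (∫ z, p (glue h y z) ∂(pm μ (N - m))) := by
  have hg := measurePreserving_glue μ h
  refine Measure.ext fun E hE => ?_
  have hE' := measurable_firstCoords (N := N) h hE
  have hmeas : Measurable fun q : (Fin m → Λ) × (Fin (N - m) → Λ) =>
      (firstCoords h ⁻¹' E).indicator (fun x => ENNReal.ofReal (p x)) (glue h q.1 q.2) :=
    (hp.ennreal_ofReal.indicator hE').comp hg.measurable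
  rw [Measure.map_apply (measurable_firstCoords h) hE, withDensity_apply _ hE',
    withDensity_apply _ hE, ← lintegral_indicator hE', ← lintegral_indicator hE,
    ← hg.lintegral_comp (hp.ennreal_ofReal.indicator hE'),
    lintegral_prod _ hmeas.aemeasurable]
  have hi : Integrable (fun q : (Fin m → Λ) × (Fin (N - m) → Λ) => p (glue h q.1 q.2))
      ((pm μ m).prod (pm μ (N - m))) := hg.integrable_comp_of_integrable hpi
  have h0 : ∀ᵐ q ∂((pm μ m).prod (pm μ (N - m))), 0 ≤ p (glue h q.1 q.2) :=
    hg.quasiMeasurePreserving.ae hp0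
  refine lintegral_congr_ae ?_
  filter_upwards [hi.prod_right_ae, Measure.ae_ae_of_ae_prod h0] with y hy hy0
  by_cases hyE : y ∈ E
  · rw [Set.indicator_of_mem hyE, ofReal_integral_eq_lintegral_ofReal hy hy0]
    refine lintegral_congr fun z => ?_
    rw [Set.indicator_of_mem]
    · simpa [firstCoords_glue] using hyE
  · rw [Set.indicator_of_notMem hyE]
    rw [← lintegral_zero]
    refine lintegral_congr fun z => ?_
    rw [Set.indicator_of_notMem]
    simpa [firstCoords_glue] using hyE

/-- The symmetrization of the indicator function of a set. -/
def symmIndicator {Λ : Type*} {m : ℕ} (E : Set (Fin m → Λ)) (y : Fin m → Λ) : ℝ :=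
  ∑ σ : Equiv.Perm (Fin m), E.indicator 1 (y ∘ σ)

lemma isSymm'_symmIndicator {Λ : Type*} {m : ℕ} (E : Set (Fin m → Λ)) :
    IsSymm' m (symmIndicator E) := by
  intro σ y
  exact Equiv.sum_comp (Equiv.mulLeft σ) fun τ : Equiv.Perm (Fin m) =>
    E.indicator (1 : (Fin m → Λ) → ℝ) (y ∘ τ)

lemma measurable_symmIndicator {m : ℕ} {E : Set (Fin m → Λ)} (hE : MeasurableSet E) :
    Measurable (symmIndicator E) :=
  Finset.measurable_sum _ fun σ _ => (measurable_one.indicator hE).comp (measurable_comp_right σ)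

lemma exists_bound_mSum {Λ : Type*} (N : ℕ) {m : ℕ} {v : (Fin m → Λ) → ℝ} {K : ℝ}
    (hK : ∀ y, |v y| ≤ K) : ∃ K', ∀ x, |mSum N m v x| ≤ K' := by
  refine ⟨∑ s ∈ (Finset.powersetCard m (Finset.univ : Finset (Fin N))).attach, K, fun x => ?_⟩
  rw [mSum_eq_sum_attach]
  exact (Finset.abs_sum_le_sum_abs _ _).trans (Finset.sum_le_sum fun s _ => hK _)

lemma abs_symmIndicator_le {Λ : Type*} {m : ℕ} (E : Set (Fin m → Λ)) (y : Fin m → Λ) :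
    |symmIndicator E y| ≤ ∑ _σ : Equiv.Perm (Fin m), (1 : ℝ) := by
  refine (Finset.abs_sum_le_sum_abs _ _).trans (Finset.sum_le_sum fun σ _ => ?_)
  by_cases h : y ∘ σ ∈ E <;> simp [h]

lemma PermInvariant.integral_mSum_symmIndicator {N m : ℕ} {Q : Measure (Fin N → Λ)}
    [IsFiniteMeasure Q] (hQ : PermInvariant Q) (h : m ≤ N) {E : Set (Fin m → Λ)}
    (hE : MeasurableSet E) :
    ∫ x, mSum N m (symmIndicator E) x ∂Q
      = (N.choose m : ℝ) * (m.factorial * (Q.map (firstCoords h)).real E) := by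
  have hfin : IsFiniteMeasure (Q.map (firstCoords h)) := by infer_instance
  have hinv : PermInvariant (Q.map (firstCoords h)) := by
    intro σ
    refine ⟨measurable_comp_right σ, ?_⟩
    rw [Measure.map_map (measurable_comp_right σ) (measurable_firstCoords h)]
    exact (hQ.measurePreserving_comp_embedding h (σ.toEmbedding.trans (Fin.castLEEmb h))).map_eq
  have hind : Integrable (E.indicator (1 : (Fin m → Λ) → ℝ)) (Q.map (firstCoords h)) :=
    (integrable_const (1 : ℝ)).indicator hE
  have hi : ∀ σ : Equiv.Perm (Fin m), Integrable
      (fun y => E.indicator (1 : (Fin m → Λ) → ℝ) (y ∘ σ)) (Q.map (firstCoords h)) := fun σ =>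
    (hinv σ).integrable_comp_of_integrable hind
  rw [hQ.integral_mSum h (v := symmIndicator E) (integrable_finsetSum _ fun σ _ => hi σ)]
  congr 1
  simp only [symmIndicator]
  rw [integral_finsetSum _ fun σ _ => hi σ]
  have : ∀ σ : Equiv.Perm (Fin m), ∫ y, E.indicator (1 : (Fin m → Λ) → ℝ) (y ∘ σ)
      ∂(Q.map (firstCoords h)) = (Q.map (firstCoords h)).real E := by
    intro σ
    have he := hinv σ
    rw [← integral_indicator_one hE]
    conv_rhs => rw [← he.map_eq]
    rw [integral_map he.measurable.aemeasurable (by rw [he.map_eq]; exact hind.1)]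
  simp [this, Fintype.card_perm]

/-- Replacing one coordinate of a `Q`-distributed point by an independent `ν`-distributed one
yields a measure dominated by `C • Q`. -/
def Resampling {N : ℕ} (Q : Measure (Fin N → Λ)) (ν : Measure Λ) (C : ℝ≥0∞) : Prop :=
  ∀ j, ∀ F : (Fin N → Λ) → ℝ≥0∞, Measurable F →
    ∫⁻ x, ∫⁻ s, F (Function.update x j s) ∂ν ∂Q ≤ C * ∫⁻ x, F x ∂Q

lemma glueLast_eq_update {Λ : Type*} {N : ℕ} (h : 1 ≤ N) (x : Fin N → Λ) (s : Λ) :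
    glueLast h (firstCoords (Nat.sub_le N 1) x) s
      = Function.update x ⟨N - 1, by omega⟩ s := by
  funext i
  by_cases hi : i = ⟨N - 1, by omega⟩
  · subst hi
    have : Fin.cast (by omega : N = N - 1 + 1) ⟨N - 1, by omega⟩ = Fin.last (N - 1) := by
      ext; simp
    rw [glueLast, this, Fin.snoc_last, Function.update_self]
  · have hlt : i.1 < N - 1 := by
      have : i.1 ≠ N - 1 := fun h' => hi (Fin.ext h')
      omega
    have : Fin.cast (by omega : N = N - 1 + 1) i = Fin.castSucc ⟨i.1, hlt⟩ := by
      ext; simp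
    rw [glueLast, this, Fin.snoc_castSucc, Function.update_of_ne hi]
    rfl

lemma PermInvariant.resampling_of_last {N : ℕ} {Q : Measure (Fin N → Λ)} (hQ : PermInvariant Q)
    {ν : Measure Λ} [SFinite ν] {C : ℝ≥0∞} (j₀ : Fin N)
    (h : ∀ F : (Fin N → Λ) → ℝ≥0∞, Measurable F →
      ∫⁻ x, ∫⁻ s, F (Function.update x j₀ s) ∂ν ∂Q ≤ C * ∫⁻ x, F x ∂Q) :
    Resampling Q ν C := by
  intro j F hF
  have hσ := hQ (Equiv.swap j j₀)
  have hm : Measurable fun x : Fin N → Λ => ∫⁻ s, F (Function.update x j s) ∂ν :=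
    Measurable.lintegral_prod_right' (f := fun q : (Fin N → Λ) × Λ => F (Function.update q.1 j q.2))
      (hF.comp measurable_update')
  rw [← hσ.lintegral_comp hm, ← hσ.lintegral_comp hF]
  refine le_trans (le_of_eq ?_) (h _ (hF.comp (measurable_comp_right (Equiv.swap j j₀))))
  refine lintegral_congr fun x => lintegral_congr fun s => ?_
  have : Function.update (x ∘ Equiv.swap j j₀) j s
      = Function.update x j₀ s ∘ Equiv.swap j j₀ := by
    rw [Function.update_comp_equiv]
    simp
  rw [this]

lemma measurable_rho (μ : Measure Λ) [SigmaFinite μ] {N m : ℕ} (h : m ≤ N)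
    {P : (Fin N → Λ) → ℝ} (hP : Measurable P) : Measurable (rho μ N m h P) := by
  have : StronglyMeasurable fun q : (Fin m → Λ) × (Fin (N - m) → Λ) => P (glue h q.1 q.2) :=
    (hP.comp (measurePreserving_glue μ h).measurable).stronglyMeasurable
  exact this.integral_prod_right'.measurable

lemma exists_uniform_lower_bound (μ : Measure Λ) [SigmaFinite μ] {N : ℕ} (hN : 1 ≤ N)
    {P : (Fin N → Λ) → ℝ} (hP : Measurable P)
    (hcond : ∃ B : Set Λ, MeasurableSet B ∧ 0 < μ B ∧
      ∀ᵐ t ∂μ, t ∈ B → ∃ γ : ℝ, 0 < γ ∧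
        ∀ᵐ y ∂(pm μ (N - 1)), γ * rho μ N (N - 1) (Nat.sub_le N 1) P y ≤ P (glueLast hN y t))
    (hρ : ∀ᵐ y ∂(pm μ (N - 1)), 0 ≤ rho μ N (N - 1) (Nat.sub_le N 1) P y) :
    ∃ (B : Set Λ) (ε : ℝ), MeasurableSet B ∧ 0 < μ B ∧ μ B < ∞ ∧ 0 < ε ∧ ∀ t ∈ B,
      ∀ᵐ y ∂(pm μ (N - 1)), ε * rho μ N (N - 1) (Nat.sub_le N 1) P y ≤ P (glueLast hN y t) := by
  obtain ⟨B, hB, hBpos, hBγ⟩ := hcond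
  set r := rho μ N (N - 1) (Nat.sub_le N 1) P with hr
  have hrm : Measurable r := measurable_rho μ _ hP
  let E : ℕ → Set Λ := fun n =>
    {t | ∀ᵐ y ∂(pm μ (N - 1)), (1 / (n + 1 : ℝ)) * r y ≤ P (glueLast hN y t)}
  have hE : ∀ n, MeasurableSet (E n) := by
    intro n
    have hs : MeasurableSet {q : (Fin (N - 1) → Λ) × Λ |
        ¬ (1 / (n + 1 : ℝ)) * r q.1 ≤ P (glueLast hN q.1 q.2)} :=
      (measurableSet_le ((hrm.comp measurable_fst).const_mul _)
        (hP.comp (measurePreserving_glueLast μ hN).measurable)).compl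
    exact measurable_measure_prodMk_right (μ := pm μ (N - 1)) hs (measurableSet_singleton 0)
  have hex : ∃ n, 0 < μ (B ∩ E n) := by
    by_contra! hcon
    have h0 : μ (⋃ n, B ∩ E n) = 0 := measure_iUnion_null fun n => le_antisymm (hcon n) zero_le
    have hle : μ B ≤ μ (⋃ n, B ∩ E n) := by
      refine measure_mono_ae ?_
      filter_upwards [hBγ] with t ht htB
      obtain ⟨γ, hγ, hγP⟩ := ht htB
      obtain ⟨n, hn⟩ := exists_nat_one_div_lt hγ
      refine Set.mem_iUnion.2 ⟨n, htB, ?_⟩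
      filter_upwards [hγP, hρ] with y hy hy0
      exact (mul_le_mul_of_nonneg_right hn.le hy0).trans hy
    exact absurd (hle.trans h0.le) (not_le.2 hBpos)
  obtain ⟨n, hn⟩ := hex
  obtain ⟨B', hB', hsub, hpos, hfin⟩ := Measure.exists_subset_measure_lt_top (hB.inter (hE n)) hn
  exact ⟨B', 1 / (n + 1 : ℝ), hB', hpos, hfin, by positivity, fun t ht => (hsub ht).2⟩

lemma rho_nonneg_ae (μ : Measure Λ) [SigmaFinite μ] {N m : ℕ} (h : m ≤ N)
    {P : (Fin N → Λ) → ℝ} (hP0 : ∀ᵐ x ∂(pm μ N), 0 ≤ P x) :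
    ∀ᵐ y ∂(pm μ m), 0 ≤ rho μ N m h P y := by
  have h0 : ∀ᵐ q ∂((pm μ m).prod (pm μ (N - m))), 0 ≤ P (glue h q.1 q.2) :=
    (measurePreserving_glue μ h).quasiMeasurePreserving.ae hP0
  filter_upwards [Measure.ae_ae_of_ae_prod h0] with y hy
  exact integral_nonneg_of_ae hy

lemma exists_resampling (μ : Measure Λ) [SigmaFinite μ] {N : ℕ} (hN : 1 ≤ N)
    {P : (Fin N → Λ) → ℝ} (hP : Measurable P) (hPi : Integrable P (pm μ N))
    (hP0 : ∀ᵐ x ∂(pm μ N), 0 ≤ P x) (hinv : PermInvariant (Pmeas μ N P))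
    (hcond : ∃ B : Set Λ, MeasurableSet B ∧ 0 < μ B ∧
      ∀ᵐ t ∂μ, t ∈ B → ∃ γ : ℝ, 0 < γ ∧
        ∀ᵐ y ∂(pm μ (N - 1)), γ * rho μ N (N - 1) (Nat.sub_le N 1) P y ≤ P (glueLast hN y t)) :
    ∃ (ν : Measure Λ) (C : ℝ≥0∞), IsProbabilityMeasure ν ∧ C ≠ ∞ ∧
      Resampling (Pmeas μ N P) ν C := by
  have hglue := measurePreserving_glueLast μ hN
  have hρ := rho_nonneg_ae μ (Nat.sub_le N 1) hP0
  obtain ⟨B, ε, hB, hBpos, hBfin, hε, hBε⟩ := exists_uniform_lower_bound μ hN hP hcond hρ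
  set r := rho μ N (N - 1) (Nat.sub_le N 1) P with hr
  have hrm : Measurable r := measurable_rho μ _ hP
  have hεr : ∀ t ∈ B, ∀ᵐ y ∂(pm μ (N - 1)),
      ENNReal.ofReal (r y) ≤ (ENNReal.ofReal ε)⁻¹ * ENNReal.ofReal (P (glueLast hN y t)) := by
    intro t ht
    filter_upwards [hBε t ht] with y hy
    rw [← ENNReal.ofReal_inv_of_pos hε, ← ENNReal.ofReal_mul (by positivity)]
    refine ENNReal.ofReal_le_ofReal ?_
    rw [inv_mul_eq_div, le_div_iff₀ hε, mul_comm]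
    exact hy
  have hprob : IsProbabilityMeasure ((μ B)⁻¹ • μ.restrict B) :=
    ⟨by simp [ENNReal.inv_mul_cancel hBpos.ne' hBfin.ne]⟩
  refine ⟨(μ B)⁻¹ • μ.restrict B, (μ B)⁻¹ * (ENNReal.ofReal ε)⁻¹, hprob,
    ENNReal.mul_ne_top (by simpa using hBpos.ne') (by simpa using hε), ?_⟩
  refine hinv.resampling_of_last ⟨N - 1, by omega⟩ fun F hF => ?_
  have hFg : Measurable fun q : (Fin (N - 1) → Λ) × Λ => F (glueLast hN q.1 q.2) :=
    hF.comp hglue.measurable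
  have hPg : Measurable fun q : (Fin (N - 1) → Λ) × Λ =>
      ENNReal.ofReal (P (glueLast hN q.1 q.2)) := (hP.comp hglue.measurable).ennreal_ofReal
  simp only [lintegral_smul_measure, smul_eq_mul, ← glueLast_eq_update hN]
  have hmi : Measurable fun y : Fin (N - 1) → Λ => ∫⁻ s in B, F (glueLast hN y s) ∂μ :=
    hFg.lintegral_prod_right'
  have hmap : (Pmeas μ N P).map (firstCoords (Nat.sub_le N 1))
      = (pm μ (N - 1)).withDensity fun y => ENNReal.ofReal (r y) :=
    map_firstCoords_withDensity μ _ hP hPi hP0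
  rw [lintegral_const_mul' _ _ (by simpa using hBpos.ne'), mul_assoc,
    ← lintegral_map hmi (measurable_firstCoords _), hmap,
    lintegral_withDensity_eq_lintegral_mul _ hrm.ennreal_ofReal hmi]
  gcongr
  calc ∫⁻ y, ENNReal.ofReal (r y) * ∫⁻ s in B, F (glueLast hN y s) ∂μ ∂(pm μ (N - 1))
      = ∫⁻ y, ∫⁻ s in B, ENNReal.ofReal (r y) * F (glueLast hN y s) ∂μ ∂(pm μ (N - 1)) := by
        refine lintegral_congr fun y => ?_
        rw [lintegral_const_mul]
        exact hFg.comp measurable_prodMk_left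
    _ = ∫⁻ s in B, ∫⁻ y, ENNReal.ofReal (r y) * F (glueLast hN y s) ∂(pm μ (N - 1)) ∂μ :=
        lintegral_lintegral_swap
          (((hrm.comp measurable_fst).ennreal_ofReal.mul hFg).aemeasurable)
    _ ≤ ∫⁻ s in B, ∫⁻ y, (ENNReal.ofReal ε)⁻¹ * (ENNReal.ofReal (P (glueLast hN y s))
          * F (glueLast hN y s)) ∂(pm μ (N - 1)) ∂μ := by
        refine setLIntegral_mono' hB fun s hs => lintegral_mono_ae ?_
        filter_upwards [hεr s hs] with y hy
        rw [← mul_assoc]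
        gcongr
    _ ≤ ∫⁻ s, ∫⁻ y, (ENNReal.ofReal ε)⁻¹ * (ENNReal.ofReal (P (glueLast hN y s))
          * F (glueLast hN y s)) ∂(pm μ (N - 1)) ∂μ := setLIntegral_le_lintegral _ _
    _ = ∫⁻ q, (ENNReal.ofReal ε)⁻¹ * (ENNReal.ofReal (P (glueLast hN q.1 q.2))
          * F (glueLast hN q.1 q.2)) ∂((pm μ (N - 1)).prod μ) :=
        (lintegral_prod_symm' _ ((hPg.mul hFg).const_mul _)).symm
    _ = (ENNReal.ofReal ε)⁻¹ * ∫⁻ x, F x ∂(Pmeas μ N P) := by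
        rw [lintegral_const_mul' _ _ (by simpa using hε), Pmeas,
          lintegral_withDensity_eq_lintegral_mul _ hP.ennreal_ofReal hF,
          ← hglue.lintegral_comp (hP.ennreal_ofReal.mul hF)]
        rfl

lemma Resampling.lintegral_lmarginal_le {N : ℕ} {Q : Measure (Fin N → Λ)} {ν : Measure Λ}
    [SigmaFinite ν] {C : ℝ≥0∞} (h : Resampling Q ν C) {F : (Fin N → Λ) → ℝ≥0∞}
    (hF : Measurable F) (J : Finset (Fin N)) :
    ∫⁻ x, lmarginal (fun _ => ν) J F x ∂Q ≤ C ^ J.card * ∫⁻ x, F x ∂Q := by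
  induction J using Finset.induction_on with
  | empty => simp
  | insert j J hj ih =>
    rw [Finset.card_insert_of_notMem hj, pow_succ', mul_assoc]
    refine le_trans (le_of_eq ?_) ((h j _ (hF.lmarginal (fun _ => ν))).trans (by gcongr))
    exact lintegral_congr fun x => lmarginal_insert (μ := fun _ => ν) F hF hj x

lemma measurable_piecewise_comp {N : ℕ} (A : Finset (Fin N)) (τ : Equiv.Perm (Fin N)) :
    Measurable fun q : (Fin N → Λ) × (Fin N → Λ) => A.piecewise q.1 (q.2 ∘ τ) := by
  refine measurable_pi_lambda _ fun i => ?_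
  by_cases hi : i ∈ A
  · simp only [Finset.piecewise_eq_of_mem _ _ _ hi]; fun_prop
  · simp only [Finset.piecewise_eq_of_notMem _ _ _ hi, Function.comp_apply]; fun_prop

lemma Resampling.map_piecewise_le {N : ℕ} {Q : Measure (Fin N → Λ)} {ν : Measure Λ}
    [IsProbabilityMeasure ν] {C : ℝ≥0∞} (h : Resampling Q ν C) (A : Finset (Fin N))
    (τ : Equiv.Perm (Fin N)) :
    (Q.prod (pm ν N)).map (fun q => A.piecewise q.1 (q.2 ∘ τ)) ≤ C ^ Aᶜ.card • Q := by
  have hmeas := measurable_piecewise_comp (Λ := Λ) A τ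
  refine Measure.le_iff.2 fun E hE => ?_
  have hF : Measurable (E.indicator (1 : (Fin N → Λ) → ℝ≥0∞)) := measurable_one.indicator hE
  have hFm : Measurable fun q : (Fin N → Λ) × (Fin N → Λ) =>
      E.indicator (1 : (Fin N → Λ) → ℝ≥0∞) (A.piecewise q.1 (q.2 ∘ τ)) := hF.comp hmeas
  rw [← lintegral_indicator_one hE, lintegral_map hF hmeas, lintegral_prod _ hFm.aemeasurable, Measure.smul_apply, smul_eq_mul,
    ← lintegral_indicator_one hE]
  refine le_trans (le_of_eq ?_) (h.lintegral_lmarginal_le hF Aᶜ)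
  refine lintegral_congr fun x => ?_
  have hx : Measurable fun t : (i : (Aᶜ : Finset (Fin N))) → Λ =>
      E.indicator (1 : (Fin N → Λ) → ℝ≥0∞) (Function.updateFinset x Aᶜ t) :=
    hF.comp measurable_updateFinset
  rw [lmarginal, ← lintegral_restrict_infinitePi (μ := fun _ : Fin N => ν) hx,
    Measure.infinitePi_eq_pi]
  have hτ := measurePreserving_comp_perm ν τ
  have hx' : Measurable fun t : Fin N → Λ => E.indicator (1 : (Fin N → Λ) → ℝ≥0∞)
      (Function.updateFinset x Aᶜ (Finset.restrict Aᶜ t)) :=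
    hx.comp (Finset.measurable_restrict _)
  refine Eq.trans ?_ (hτ.lintegral_comp hx')
  refine lintegral_congr fun t => ?_
  congr 1
  funext i
  by_cases hi : i ∈ A <;> simp [Function.updateFinset, hi]

lemma Resampling.integrable_generator {N m : ℕ} {Q : Measure (Fin N → Λ)} [IsProbabilityMeasure Q]
    {ν : Measure Λ} [IsProbabilityMeasure ν] {C : ℝ≥0∞} (h : Resampling Q ν C) (hC : C ≠ ∞)
    (hmN : m ≤ N) {v : (Fin m → Λ) → ℝ} (hs : IsSymm' m v) (hv : Measurable v)
    (hi : Integrable (mSum N m v) Q) : Integrable v (Q.map (firstCoords hmN)) := by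
  obtain ⟨c, A, τ, hf⟩ := exists_generator_formula Λ N m hmN
  have hT : ∀ T, Integrable (fun q : (Fin N → Λ) × (Fin N → Λ) =>
      mSum N m v ((A T).piecewise q.1 (q.2 ∘ τ T))) (Q.prod (pm ν N)) := fun T =>
    ((hi.smul_measure (ENNReal.pow_ne_top hC)).mono_measure
      (h.map_piecewise_le (A T) (τ T))).comp_measurable (measurable_piecewise_comp _ _)
  have hΘ : Integrable (fun q : (Fin N → Λ) × (Fin N → Λ) => v (firstCoords hmN q.1))
      (Q.prod (pm ν N)) := by
    refine (integrable_finsetSum Finset.univ fun T _ => (hT T).const_mul (c T)).congr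
      (ae_of_all _ fun q => (hf v hs q.1 q.2).symm)
  have hprob : IsProbabilityMeasure (pm ν N) := by unfold pm; infer_instance
  rw [integrable_map_measure hv.aestronglyMeasurable (measurable_firstCoords hmN).aemeasurable]
  exact (measurePreserving_fst.integrable_comp
    (hv.comp (measurable_firstCoords hmN)).aestronglyMeasurable).1 hΘ

lemma Resampling.ae_piecewise {N : ℕ} {Q : Measure (Fin N → Λ)} {ν : Measure Λ}
    [IsProbabilityMeasure ν] {C : ℝ≥0∞} (h : Resampling Q ν C) {p : (Fin N → Λ) → Prop}
    (hp : ∀ᵐ x ∂Q, p x) (A : Finset (Fin N)) (τ : Equiv.Perm (Fin N)) :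
    ∀ᵐ q ∂(Q.prod (pm ν N)), p (A.piecewise q.1 (q.2 ∘ τ)) := by
  have h1 : ∀ᵐ x ∂((Q.prod (pm ν N)).map fun q => A.piecewise q.1 (q.2 ∘ τ)), p x :=
    ((Measure.absolutelyContinuous_of_le (h.map_piecewise_le A τ)).trans
      Measure.smul_absolutelyContinuous).ae_le hp
  exact ae_of_ae_map (measurable_piecewise_comp A τ).aemeasurable h1

lemma ae_of_ae_prod_fst {α β : Type*} [MeasurableSpace α] [MeasurableSpace β] {μ : Measure α}
    {ν : Measure β} [SFinite ν] [NeZero ν] {p : α → Prop} (h : ∀ᵐ q ∂(μ.prod ν), p q.1) :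
    ∀ᵐ x ∂μ, p x := by
  filter_upwards [Measure.ae_ae_of_ae_prod h] with x hx
  exact hx.exists.choose_spec

lemma Resampling.generator_ae_eq_const {N m : ℕ} {Q : Measure (Fin N → Λ)} [IsProbabilityMeasure Q]
    {ν : Measure Λ} [IsProbabilityMeasure ν] {C : ℝ≥0∞} (h : Resampling Q ν C)
    (hmN : m ≤ N) {v : (Fin m → Λ) → ℝ} (hs : IsSymm' m v) {a : ℝ}
    (ha : ∀ᵐ x ∂Q, mSum N m v x = a) :
    ∃ b : ℝ, ∀ᵐ x ∂Q, v (firstCoords hmN x) = b := by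
  obtain ⟨c, A, τ, hf⟩ := exists_generator_formula Λ N m hmN
  have hprob : IsProbabilityMeasure (pm ν N) := by unfold pm; infer_instance
  refine ⟨∑ T, c T * a, ae_of_ae_prod_fst (ν := pm ν N) ?_⟩
  filter_upwards [ae_all_iff.2 fun T => h.ae_piecewise ha (A T) (τ T)] with q hq
  rw [hf v hs q.1 q.2]
  exact Finset.sum_congr rfl fun T _ => by rw [hq T]

lemma Resampling.exists_limit_generator {N m : ℕ} {Q : Measure (Fin N → Λ)}
    [IsProbabilityMeasure Q] (hQ : PermInvariant Q) {ν : Measure Λ} [IsProbabilityMeasure ν]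
    {C : ℝ≥0∞} (h : Resampling Q ν C) (hmN : m ≤ N) {v : ℕ → (Fin m → Λ) → ℝ}
    (hs : ∀ n, IsSymm' m (v n)) (hv : ∀ n, Measurable (v n))
    (hlim : ∀ᵐ x ∂Q, ∃ l, Tendsto (fun n => mSum N m (v n) x) atTop (nhds l)) :
    ∃ u : (Fin m → Λ) → ℝ, IsSymm' m u ∧ Measurable u ∧
      ∀ᵐ x ∂Q, Tendsto (fun n => mSum N m (v n) x) atTop (nhds (mSum N m u x)) := by
  obtain ⟨c, A, τ, hf⟩ := exists_generator_formula Λ N m hmN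
  have hprob : IsProbabilityMeasure (pm ν N) := by unfold pm; infer_instance
  have hgen : ∀ᵐ x ∂Q, ∃ l, Tendsto (fun n => v n (firstCoords hmN x)) atTop (nhds l) := by
    refine ae_of_ae_prod_fst (ν := pm ν N) ?_
    filter_upwards [ae_all_iff.2 fun T => h.ae_piecewise hlim (A T) (τ T)] with q hq
    choose l hl using hq
    refine ⟨∑ T, c T * l T, ?_⟩
    simp only [fun n => hf (v n) (hs n) q.1 q.2]
    exact tendsto_finsetSum _ fun T _ => (hl T).const_mul (c T)
  let u : (Fin m → Λ) → ℝ := fun y => (limsup (fun n => ((v n y : ℝ) : EReal)) atTop).toReal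
  have hu : ∀ y, (∃ l, Tendsto (fun n => v n y) atTop (nhds l)) →
      Tendsto (fun n => v n y) atTop (nhds (u y)) := by
    rintro y ⟨l, hl⟩
    have : limsup (fun n => ((v n y : ℝ) : EReal)) atTop = (l : EReal) :=
      ((continuous_coe_real_ereal.tendsto l).comp hl).limsup_eq
    simpa [u, this] using hl
  refine ⟨u, fun σ y => ?_, ?_, ?_⟩
  · simp only [u, fun n => hs n σ y]
  · exact (Measurable.limsup fun n => measurable_coe_real_ereal.comp (hv n)).ereal_toReal
  · have hall : ∀ e : Fin m ↪ Fin N, ∀ᵐ x ∂Q, ∃ l, Tendsto (fun n => v n (x ∘ e)) atTop (nhds l) := by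
      intro e
      obtain ⟨σ, hσ⟩ := exists_perm_extending hmN e
      filter_upwards [(hQ σ).quasiMeasurePreserving.ae hgen] with x hx
      have : firstCoords hmN (x ∘ σ) = x ∘ e := by
        funext i
        simp [firstCoords, hσ]
      rwa [this] at hx
    filter_upwards [ae_all_iff.2 hall] with x hx
    simp only [mSum_eq_sum_attach]
    exact tendsto_finsetSum _ fun s _ => hu _ (hx _)

/-- The unnormalized Gibbs measure `e^{-U-W} d^N x`. -/
def gibbs (μ : Measure Λ) (N : ℕ) (W U : (Fin N → Λ) → ℝ) : Measure (Fin N → Λ) :=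
  (pm μ N).withDensity fun x => ENNReal.ofReal (Real.exp (-(U x) - W x))

lemma pm_neZero {μ : Measure Λ} [SigmaFinite μ] (hμ : μ ≠ 0) (k : ℕ) : NeZero (pm μ k) := by
  refine ⟨fun h => ?_⟩
  have h1 : pm μ k Set.univ = 0 := by simp [h]
  rw [pm, Measure.pi_univ] at h1
  obtain ⟨i, -, hi⟩ := Finset.prod_eq_zero_iff.1 h1
  exact hμ (Measure.measure_univ_eq_zero.1 hi)

lemma integrable_exp_Wmeas_iff (μ : Measure Λ) [SigmaFinite μ] {N : ℕ} {W : (Fin N → Λ) → ℝ}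
    (hW : Measurable W) (V : (Fin N → Λ) → ℝ) :
    Integrable (fun x => Real.exp (-(V x))) (Wmeas μ N W)
      ↔ Integrable (fun x => Real.exp (-(V x) - W x)) (pm μ N) := by
  rw [Wmeas, integrable_withDensity_iff_integrable_smul' (by fun_prop) (ae_of_all _ fun _ => by simp)]
  refine integrable_congr (ae_of_all _ fun x => ?_)
  simp only [smul_eq_mul]
  rw [ENNReal.toReal_ofReal (Real.exp_pos _).le, ← Real.exp_add]
  ring_nf

lemma toReal_mul_exp_log {p : ℝ} (hp : 0 < p) (a w : ℝ) :
    (ENNReal.ofReal p).toReal * Real.exp (-a - (w + Real.log p)) = Real.exp (-a - w) := by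
  rw [ENNReal.toReal_ofReal hp.le, show -a - (w + Real.log p) = (-a - w) - Real.log p by ring,
    Real.exp_sub, Real.exp_log hp]
  field_simp

lemma integrable_exp_Pmeas_iff (μ : Measure Λ) [SigmaFinite μ] {N : ℕ} {P : (Fin N → Λ) → ℝ}
    (hP : Measurable P) (hP0 : ∀ᵐ x ∂(pm μ N), 0 < P x) (W V : (Fin N → Λ) → ℝ) :
    Integrable (fun x => Real.exp (-V x - (W x + Real.log (P x)))) (Pmeas μ N P)
      ↔ Integrable (fun x => Real.exp (-(V x) - W x)) (pm μ N) := by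
  rw [Pmeas, integrable_withDensity_iff_integrable_smul' hP.ennreal_ofReal
    (ae_of_all _ fun _ => by simp)]
  refine integrable_congr ?_
  filter_upwards [hP0] with x hx
  exact toReal_mul_exp_log hx _ _

lemma integral_mul_exp_Pmeas (μ : Measure Λ) [SigmaFinite μ] {N : ℕ} {P W U : (Fin N → Λ) → ℝ}
    (hP : Measurable P) (hP0 : ∀ᵐ x ∂(pm μ N), 0 < P x) (hW : Measurable W) (hU : Measurable U)
    (w : (Fin N → Λ) → ℝ) :
    ∫ x, w x * Real.exp (-U x - (W x + Real.log (P x))) ∂(Pmeas μ N P)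
      = ∫ x, w x ∂(gibbs μ N W U) := by
  rw [Pmeas, gibbs, integral_withDensity_eq_integral_toReal_smul hP.ennreal_ofReal
      (ae_of_all _ fun _ => by simp),
    integral_withDensity_eq_integral_toReal_smul (by fun_prop) (ae_of_all _ fun _ => by simp)]
  refine integral_congr_ae ?_
  filter_upwards [hP0] with x hx
  simp only [smul_eq_mul]
  rw [mul_left_comm, toReal_mul_exp_log hx, ENNReal.toReal_ofReal (Real.exp_pos _).le, mul_comm]

lemma Zfun_eq_integral (μ : Measure Λ) [SigmaFinite μ] {N : ℕ} {W U : (Fin N → Λ) → ℝ}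
    (he : Integrable (fun x => Real.exp (-(U x) - W x)) (pm μ N)) :
    Zfun μ N W U = ∫ x, Real.exp (-(U x) - W x) ∂(pm μ N) := by
  rw [Zfun, ZE, ← ofReal_integral_eq_lintegral_ofReal he (ae_of_all _ fun x => (Real.exp_pos _).le),
    ENNReal.toReal_ofReal (integral_nonneg fun x => (Real.exp_pos _).le)]

lemma Zfun_pos {μ : Measure Λ} [SigmaFinite μ] (hμ : μ ≠ 0) {N : ℕ} {W U : (Fin N → Λ) → ℝ}
    (he : Integrable (fun x => Real.exp (-(U x) - W x)) (pm μ N)) : 0 < Zfun μ N W U := by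
  have := pm_neZero hμ N
  rw [Zfun_eq_integral μ he]
  exact integral_exp_pos he

lemma isFiniteMeasure_gibbs (μ : Measure Λ) {N : ℕ} {W U : (Fin N → Λ) → ℝ}
    (he : Integrable (fun x => Real.exp (-(U x) - W x)) (pm μ N)) :
    IsFiniteMeasure (gibbs μ N W U) :=
  isFiniteMeasure_withDensity_ofReal he.2

lemma permInvariant_gibbs (μ : Measure Λ) [SigmaFinite μ] {N m : ℕ} {W : (Fin N → Λ) → ℝ}
    (hW : Measurable W) (hWs : ∀ σ : Equiv.Perm (Fin N), ∀ᵐ x ∂(pm μ N), W (x ∘ σ) = W x)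
    {u : (Fin m → Λ) → ℝ} (hu : IsSymm' m u) (hum : Measurable u) :
    PermInvariant (gibbs μ N W (mSum N m u)) := by
  have := measurable_mSum N hum
  refine permInvariant_withDensity μ (by fun_prop) fun σ => ?_
  filter_upwards [hWs σ] with x hx
  rw [hx, mSum_comp_perm hu]

lemma rhoU_ae_eq_iff {μ : Measure Λ} [SigmaFinite μ] (hμ : μ ≠ 0) {N m : ℕ} (h : m ≤ N)
    {P W U : (Fin N → Λ) → ℝ} (hP : Measurable P) (hP0 : ∀ᵐ x ∂(pm μ N), 0 < P x)
    (hW : Measurable W) (hU : Measurable U)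
    (he : Integrable (fun x => Real.exp (-(U x) - W x)) (pm μ N)) :
    rhoU μ N m h W U =ᵐ[pm μ m] rho μ N m h P ↔
      (gibbs μ N W U).map (firstCoords h)
        = ENNReal.ofReal (Zfun μ N W U) • rhomeas μ N m h P := by
  have hZ := Zfun_pos hμ he
  set Z := Zfun μ N W U with hZdef
  have hem : Measurable fun x => Real.exp (-(U x) - W x) := by fun_prop
  have hr : rhoU μ N m h W U = fun y => rho μ N m h (fun x => Real.exp (-(U x) - W x)) y / Z := by
    funext y
    simp only [rhoU, rho, ← hZdef]
    congr 2
    funext z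
    ring_nf
  have hρm := measurable_rho μ h hP
  have hρU := measurable_rho μ h hem
  have hρ0 := rho_nonneg_ae μ h (hP0.mono fun x hx => hx.le)
  have hmap : (gibbs μ N W U).map (firstCoords h) = (pm μ m).withDensity
      fun y => ENNReal.ofReal (rho μ N m h (fun x => Real.exp (-(U x) - W x)) y) :=
    map_firstCoords_withDensity μ h hem he (ae_of_all _ fun x => (Real.exp_pos _).le)
  rw [hmap, rhomeas, ← withDensity_smul _ hρm.ennreal_ofReal,
    withDensity_eq_iff_of_sigmaFinite hρU.ennreal_ofReal.aemeasurable
      (hρm.ennreal_ofReal.const_smul _).aemeasurable, hr]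
  refine eventually_congr ?_
  filter_upwards [hρ0] with y hy
  have hy' : 0 ≤ rho μ N m h (fun x => Real.exp (-(U x) - W x)) y :=
    integral_nonneg fun z => (Real.exp_pos _).le
  simp only [Pi.smul_apply, smul_eq_mul]
  rw [← ENNReal.ofReal_mul hZ.le, ENNReal.ofReal_eq_ofReal_iff hy' (by positivity),
    div_eq_iff hZ.ne', mul_comm]

lemma rhoU_congr_ae (μ : Measure Λ) [SigmaFinite μ] {N m : ℕ} (h : m ≤ N)
    {W U U' : (Fin N → Λ) → ℝ} (hU : U =ᵐ[pm μ N] U') :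
    rhoU μ N m h W U =ᵐ[pm μ m] rhoU μ N m h W U' := by
  have hZ : Zfun μ N W U = Zfun μ N W U' := by
    rw [Zfun, Zfun, ZE, ZE]
    congr 1
    refine lintegral_congr_ae ?_
    filter_upwards [hU] with x hx
    rw [hx]
  have h0 : ∀ᵐ q ∂((pm μ m).prod (pm μ (N - m))), U (glue h q.1 q.2) = U' (glue h q.1 q.2) :=
    (measurePreserving_glue μ h).quasiMeasurePreserving.ae hU
  filter_upwards [Measure.ae_ae_of_ae_prod h0] with y hy
  rw [rhoU, rhoU, hZ]
  congr 1
  refine integral_congr_ae ?_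
  filter_upwards [hy] with z hz
  rw [hz]

lemma ae_eq_of_integral_sub_mul_exp_eq {Ω : Type*} [MeasurableSpace Ω] {Q : Measure Ω}
    {a b : Ω → ℝ} (ha : Integrable (fun x => (a x - b x) * Real.exp (a x)) Q)
    (hb : Integrable (fun x => (a x - b x) * Real.exp (b x)) Q)
    (hab : ∫ x, (a x - b x) * Real.exp (a x) ∂Q = ∫ x, (a x - b x) * Real.exp (b x) ∂Q) :
    a =ᵐ[Q] b := by
  have hnn : ∀ x, 0 ≤ (a x - b x) * Real.exp (a x) - (a x - b x) * Real.exp (b x) := by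
    intro x
    rw [← mul_sub]
    rcases le_total (a x) (b x) with h | h
    · exact mul_nonneg_of_nonpos_of_nonpos (by linarith) (by simpa using h)
    · exact mul_nonneg (by linarith) (by simpa using h)
  have h0 := (integral_eq_zero_iff_of_nonneg hnn (ha.sub hb)).1 (by
    rw [integral_sub ha hb, hab, sub_self])
  filter_upwards [h0] with x hx
  simp only [Pi.zero_apply, ← mul_sub, mul_eq_zero, sub_eq_zero, Real.exp_eq_exp] at hx
  exact hx.elim id id

lemma integral_gibbs_mSum (μ : Measure Λ) [SigmaFinite μ] {N m : ℕ} (h : m ≤ N)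
    {P W : (Fin N → Λ) → ℝ} (hW : Measurable W)
    (hWs : ∀ σ : Equiv.Perm (Fin N), ∀ᵐ x ∂(pm μ N), W (x ∘ σ) = W x)
    {u v : (Fin m → Λ) → ℝ} (hu : IsSymm' m u) (hum : Measurable u)
    (hv : Integrable v (rhomeas μ N m h P))
    (hmap : (gibbs μ N W (mSum N m u)).map (firstCoords h)
      = ENNReal.ofReal (Zfun μ N W (mSum N m u)) • rhomeas μ N m h P) :
    Integrable (fun x => Real.exp (-(mSum N m u x) - W x) * mSum N m v x) (pm μ N) ∧
    ∫ x, Real.exp (-(mSum N m u x) - W x) * mSum N m v x ∂(pm μ N)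
      = Zfun μ N W (mSum N m u) * ((N.choose m : ℝ) * ∫ y, v y ∂(rhomeas μ N m h P)) := by
  have hinv := permInvariant_gibbs μ hW hWs hu hum
  have hmm := measurable_mSum N hum
  have hdm : Measurable fun x => ENNReal.ofReal (Real.exp (-(mSum N m u x) - W x)) := by fun_prop
  have hv' : Integrable v ((gibbs μ N W (mSum N m u)).map (firstCoords h)) := by
    rw [hmap]; exact hv.smul_measure ENNReal.ofReal_ne_top
  have h1 := hinv.integrable_mSum h hv'
  have h2 := hinv.integral_mSum h hv'
  rw [gibbs, integrable_withDensity_iff_integrable_smul' hdm (ae_of_all _ fun _ => by simp)] at h1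
  rw [hmap, integral_smul_measure, gibbs, integral_withDensity_eq_integral_toReal_smul hdm
    (ae_of_all _ fun _ => by simp)] at h2
  have hexp : ∀ x, (ENNReal.ofReal (Real.exp (-(mSum N m u x) - W x))).toReal
      = Real.exp (-(mSum N m u x) - W x) := fun x => ENNReal.toReal_ofReal (Real.exp_pos _).le
  simp only [hexp, smul_eq_mul] at h1 h2
  refine ⟨h1, h2.trans ?_⟩
  rw [ENNReal.toReal_ofReal (by rw [Zfun]; exact ENNReal.toReal_nonneg)]
  ring

lemma mSum_sub_ae_eq_const {μ : Measure Λ} [SigmaFinite μ] (hμ : μ ≠ 0) {N m : ℕ} (h : m ≤ N)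
    {P W : (Fin N → Λ) → ℝ} (hW : Measurable W)
    (hWs : ∀ σ : Equiv.Perm (Fin N), ∀ᵐ x ∂(pm μ N), W (x ∘ σ) = W x)
    {u : Fin 2 → (Fin m → Λ) → ℝ} (hu : ∀ i, IsSymm' m (u i)) (hum : ∀ i, Measurable (u i))
    (hui : ∀ i, Integrable (u i) (rhomeas μ N m h P))
    (he : ∀ i, Integrable (fun x => Real.exp (-(mSum N m (u i) x) - W x)) (pm μ N))
    (hmap : ∀ i, (gibbs μ N W (mSum N m (u i))).map (firstCoords h)
      = ENNReal.ofReal (Zfun μ N W (mSum N m (u i))) • rhomeas μ N m h P) :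
    ∃ C : ℝ, ∀ᵐ x ∂(pm μ N), mSum N m (u 1) x - mSum N m (u 0) x = C := by
  set Z : Fin 2 → ℝ := fun i => Zfun μ N W (mSum N m (u i)) with hZdef
  have hZ : ∀ i, 0 < Z i := fun i => Zfun_pos hμ (he i)
  let a : Fin 2 → (Fin N → Λ) → ℝ := fun i x => -(mSum N m (u i) x) - W x - Real.log (Z i)
  have ha : ∀ i x, Real.exp (a i x) = Real.exp (-(mSum N m (u i) x) - W x) / Z i := fun i x => by
    rw [Real.exp_sub, Real.exp_log (hZ i)]
  have hd : ∀ x, a 0 x - a 1 x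
      = mSum N m (u 1) x - mSum N m (u 0) x - (Real.log (Z 0) - Real.log (Z 1)) := fun x => by
    simp only [a]; ring
  set k := Real.log (Z 0) - Real.log (Z 1) with hk
  let M : Fin 2 → ℝ := fun j => (N.choose m : ℝ) * ∫ y, u j y ∂(rhomeas μ N m h P)
  have hint : ∀ i, Integrable (fun x => (a 0 x - a 1 x) * Real.exp (a i x)) (pm μ N) ∧
      ∫ x, (a 0 x - a 1 x) * Real.exp (a i x) ∂(pm μ N) = M 1 - M 0 - k := by
    intro i
    have hj := fun j => integral_gibbs_mSum μ h hW hWs (hu i) (hum i) (hui j) (hmap i)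
    have heq : (fun x => (a 0 x - a 1 x) * Real.exp (a i x)) = fun x =>
        (Real.exp (-(mSum N m (u i) x) - W x) * mSum N m (u 1) x
          - Real.exp (-(mSum N m (u i) x) - W x) * mSum N m (u 0) x
          - Real.exp (-(mSum N m (u i) x) - W x) * k) / Z i := by
      funext x
      rw [ha, hd]
      ring
    have h10 : Integrable (fun x => Real.exp (-(mSum N m (u i) x) - W x) * mSum N m (u 1) x
        - Real.exp (-(mSum N m (u i) x) - W x) * mSum N m (u 0) x) (pm μ N) :=
      (hj 1).1.sub (hj 0).1
    rw [heq]
    refine ⟨(h10.sub ((he i).mul_const k)).div_const _, ?_⟩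
    rw [integral_div, integral_sub h10 ((he i).mul_const k), integral_sub (hj 1).1 (hj 0).1,
      (hj 1).2, (hj 0).2, integral_mul_const, ← Zfun_eq_integral μ (he i)]
    have := (hZ i).ne'
    simp only [Z, M] at this ⊢
    field_simp
  refine ⟨k, ?_⟩
  filter_upwards [ae_eq_of_integral_sub_mul_exp_eq (hint 0).1 (hint 1).1
    ((hint 0).2.trans (hint 1).2.symm)] with x hx
  have := hd x
  rw [hx] at this
  linarith

lemma exists_potential_of_generators {μ : Measure Λ} [SigmaFinite μ] (hμ : μ ≠ 0) {N m : ℕ}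
    (h : m ≤ N) {P W : (Fin N → Λ) → ℝ} (hP : Measurable P) (hP0 : ∀ᵐ x ∂(pm μ N), 0 < P x)
    (hW : Measurable W) (hWs : ∀ σ : Equiv.Perm (Fin N), ∀ᵐ x ∂(pm μ N), W (x ∘ σ) = W x)
    [IsProbabilityMeasure (Pmeas μ N P)] (hQ : PermInvariant (Pmeas μ N P))
    (hmap : (Pmeas μ N P).map (firstCoords h) = rhomeas μ N m h P)
    {ν : Measure Λ} [IsProbabilityMeasure ν] {C : ℝ≥0∞} (hR : Resampling (Pmeas μ N P) ν C)
    (hH : Integrable (fun x => max (W x + Real.log (P x)) 0) (Pmeas μ N P))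
    {v : (Fin m → Λ) → ℝ} (hv : IsSymm' m v) (hvm : Measurable v)
    (hvi : Integrable (mSum N m v) (Pmeas μ N P))
    (hve : Integrable (fun x => Real.exp (-(mSum N m v x) - W x)) (pm μ N)) :
    ∃ u, IsSymm' m u ∧ Measurable u ∧ Integrable (mSum N m u) (Pmeas μ N P) ∧
      Integrable (fun x => Real.exp (-(mSum N m u x) - W x)) (pm μ N) ∧
      rhoU μ N m h W (mSum N m u) =ᵐ[pm μ m] rho μ N m h P := by
  have hchoose : (N.choose m : ℝ) ≠ 0 := by exact_mod_cast (Nat.choose_pos h).ne'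
  let S : Set ((Fin N → Λ) → ℝ) := {V | ∃ v, IsSymm' m v ∧ Measurable v ∧ V = mSum N m v}
  have hHm : Measurable fun x => W x + Real.log (P x) := by fun_prop
  have hlin : ∀ (a b : ℝ) (v w : (Fin m → Λ) → ℝ), IsSymm' m v → Measurable v → IsSymm' m w →
      Measurable w → (fun x => a * mSum N m v x + b * mSum N m w x) ∈ S := by
    intro a b v w hv hvm hw hwm
    refine ⟨fun y => a * v y + b * w y, fun σ y => ?_, by fun_prop,
      funext fun x => (mSum_linear N m a b v w x).symm⟩
    simp only [hv σ y, hw σ y]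
  obtain ⟨U, ⟨u, hu, hum, rfl⟩, hUi, hUe, hmin⟩ := exists_freeEnergy_minimizer
    (Q := Pmeas μ N P) hHm.aestronglyMeasurable hH S
    (by
      rintro _ ⟨v, hv, hvm, rfl⟩ c
      convert hlin 1 1 v (fun _ => c / N.choose m) hv hvm (fun _ _ => rfl) measurable_const using 2
      rw [mSum_const, mul_div_cancel₀ _ hchoose]
      ring)
    (by
      rintro _ ⟨v, hv, hvm, rfl⟩ _ ⟨w, hw, hwm, rfl⟩
      convert hlin (1 / 2) (1 / 2) v w hv hvm hw hwm using 2
      ring)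
    (by
      intro V hV hlim
      choose w hw hwm hVw using hV
      obtain rfl : V = fun n => mSum N m (w n) := funext hVw
      obtain ⟨u, hu, hum, hlim'⟩ := hR.exists_limit_generator hQ h hw hwm hlim
      exact ⟨_, ⟨u, hu, hum, rfl⟩, hlim'⟩)
    ⟨_, ⟨v, hv, hvm, rfl⟩, hvi, (integrable_exp_Pmeas_iff μ hP hP0 W _).2 hve⟩
  have he := (integrable_exp_Pmeas_iff μ hP hP0 W _).1 hUe
  have hUm := measurable_mSum N hum
  refine ⟨u, hu, hum, hUi, he, (rhoU_ae_eq_iff hμ h hP hP0 hW hUm he).2 ?_⟩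
  have hfin := isFiniteMeasure_gibbs μ he
  have hZ := Zfun_pos hμ he
  rw [← hmap]
  refine Measure.ext fun E hE => ?_
  have hEu := isSymm'_symmIndicator E
  have hEm := measurable_symmIndicator hE
  obtain ⟨K, hK⟩ := exists_bound_mSum N (abs_symmIndicator_le E)
  have hEL := integral_mul_exp_of_minimizer hUi hUe (measurable_mSum N hEm) hK fun ε h1 h2 =>
    hmin _ (by simpa using hlin 1 ε u (symmIndicator E) hu hum hEu hEm) h1 h2
  have hone := integral_mul_exp_Pmeas μ hP hP0 hW hUm fun _ => 1
  simp only [one_mul, integral_const, smul_eq_mul, mul_one] at hone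
  have hmass : (gibbs μ N W (mSum N m u)).real Set.univ = Zfun μ N W (mSum N m u) := by
    rw [Measure.real, gibbs, withDensity_apply _ MeasurableSet.univ, Measure.restrict_univ]
    rfl
  rw [integral_mul_exp_Pmeas μ hP hP0 hW hUm, hone, hmass,
    (permInvariant_gibbs μ hW hWs hu hum).integral_mSum_symmIndicator h hE,
    hQ.integral_mSum_symmIndicator h hE] at hEL
  have hfac : (m.factorial : ℝ) ≠ 0 := by positivity
  have hreal : ((gibbs μ N W (mSum N m u)).map (firstCoords h)).real E
      = Zfun μ N W (mSum N m u) * ((Pmeas μ N P).map (firstCoords h)).real E := by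
    refine mul_left_cancel₀ (mul_ne_zero hchoose hfac) ?_
    linarith
  rw [Measure.smul_apply, smul_eq_mul,
    ← ENNReal.toReal_eq_toReal_iff' (measure_ne_top _ _)
      (ENNReal.mul_ne_top ENNReal.ofReal_ne_top (measure_ne_top _ _)),
    ENNReal.toReal_mul, ENNReal.toReal_ofReal hZ.le]
  exact hreal

/-- Suppose there is `B ⊂ Λ` of positive measure such that for a.e.
`x_N ∈ B` there is `γ(x_N) > 0` with `P(·, x_N) ≥ γ(x_N) ρ^{(N-1)}` a.e. on `Λ^{N-1}`.
Then `V_P = V_{ρ^{(m)}}`.  If moreover `V_P ≠ ∅` and `(W + log P)₊ ∈ L¹(Λ^N; P d^N x)`,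
then there is `U ∈ V_P` with `m`-sum structure such that `ρ_U^{(m)} = ρ^{(m)}` a.e.,
and any two such solutions differ a.e. by a real constant, as do their generators. -/
theorem statement17 (μ : Measure Λ) [SigmaFinite μ] (hμ : μ ≠ 0)
    (N m : ℕ) (hN : 2 ≤ N) (hm : 1 ≤ m) (hmN : m ≤ N - 1)
    (P W : (Fin N → Λ) → ℝ) (hPmeas : Measurable P)
    (hPprob : ∫⁻ x, ENNReal.ofReal (P x) ∂(pm μ N) = 1)
    (hPpos : ∀ᵐ x ∂(pm μ N), 0 < P x)
    (hPsymm : ∀ σ : Equiv.Perm (Fin N), ∀ᵐ x ∂(pm μ N), P (x ∘ σ) = P x)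
    (hWmeas : Measurable W)
    (hWsymm : ∀ σ : Equiv.Perm (Fin N), ∀ᵐ x ∂(pm μ N), W (x ∘ σ) = W x)
    (hcond : ∃ B : Set Λ, MeasurableSet B ∧ 0 < μ B ∧
      ∀ᵐ t ∂μ, t ∈ B → ∃ γ : ℝ, 0 < γ ∧
        ∀ᵐ y ∂(pm μ (N - 1)),
          γ * rho μ N (N - 1) (Nat.sub_le N 1) P y
            ≤ P (glueLast (by omega) y t)) :
    (∀ V, memVP μ N m P W V
        ↔ memVrho μ N m (le_trans hmN (Nat.sub_le N 1)) P W V) ∧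
    ((∃ V, memVP μ N m P W V) →
      Integrable (fun x => max (W x + Real.log (P x)) 0) (Pmeas μ N P) →
      (∃ U u, HasSumStruct μ N m U u ∧ memVP μ N m P W U ∧
          rhoU μ N m (le_trans hmN (Nat.sub_le N 1)) W U
            =ᵐ[pm μ m] rho μ N m (le_trans hmN (Nat.sub_le N 1)) P) ∧
      (∀ U₀ U₁ u₀ u₁, memVP μ N m P W U₀ → memVP μ N m P W U₁ →
          HasSumStruct μ N m U₀ u₀ → HasSumStruct μ N m U₁ u₁ →
          rhoU μ N m (le_trans hmN (Nat.sub_le N 1)) W U₀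
            =ᵐ[pm μ m] rho μ N m (le_trans hmN (Nat.sub_le N 1)) P →
          rhoU μ N m (le_trans hmN (Nat.sub_le N 1)) W U₁
            =ᵐ[pm μ m] rho μ N m (le_trans hmN (Nat.sub_le N 1)) P →
          (∃ C : ℝ, (fun x => U₁ x - U₀ x) =ᵐ[pm μ N] fun _ => C) ∧
          (∃ c : ℝ, (fun y => u₁ y - u₀ y) =ᵐ[pm μ m] fun _ => c))) := by
  have hle : m ≤ N := le_trans hmN (Nat.sub_le N 1)
  have hP0 : ∀ᵐ x ∂(pm μ N), 0 ≤ P x := hPpos.mono fun x hx => hx.le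
  have hPi : Integrable P (pm μ N) :=
    ⟨hPmeas.aestronglyMeasurable, by
      rw [hasFiniteIntegral_iff_ofReal hP0, hPprob]; exact ENNReal.one_lt_top⟩
  have hprob : IsProbabilityMeasure (Pmeas μ N P) := ⟨by
    rw [Pmeas, withDensity_apply _ MeasurableSet.univ, Measure.restrict_univ, hPprob]⟩
  have hac : Pmeas μ N P ≪ pm μ N := withDensity_absolutelyContinuous _ _
  have hac' : pm μ N ≪ Pmeas μ N P :=
    withDensity_absolutelyContinuous' hPmeas.ennreal_ofReal.aemeasurable
      (hPpos.mono fun x hx => by simpa using hx)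
  have hQ : PermInvariant (Pmeas μ N P) :=
    permInvariant_withDensity μ hPmeas.ennreal_ofReal fun σ =>
      (hPsymm σ).mono fun x hx => by rw [hx]
  have hmap : (Pmeas μ N P).map (firstCoords hle) = rhomeas μ N m hle P :=
    map_firstCoords_withDensity μ hle hPmeas hPi hP0
  obtain ⟨ν, C, hν, hC, hR⟩ := exists_resampling μ (by omega) hPmeas hPi hP0 hQ hcond
  have hgen : ∀ V v, HasSumStruct μ N m V v → Integrable V (Pmeas μ N P) →
      Integrable v (rhomeas μ N m hle P) := by
    rintro V v ⟨hvs, hvm, hVv⟩ hV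
    rw [← hmap]
    exact hR.integrable_generator hC hle hvs hvm (hV.congr (hac.ae_eq hVv))
  have hexp : ∀ V v, HasSumStruct μ N m V v →
      Integrable (fun x => Real.exp (-(V x))) (Wmeas μ N W) →
      Integrable (fun x => Real.exp (-(mSum N m v x) - W x)) (pm μ N) := by
    rintro V v ⟨-, -, hVv⟩ hV
    refine ((integrable_exp_Wmeas_iff μ hWmeas V).1 hV).congr (hVv.mono fun x hx => ?_)
    simp only [hx]
  refine ⟨fun V => ⟨?_, ?_⟩, ?_⟩
  · rintro ⟨hV, hVe, v, hv⟩
    exact ⟨hVe, v, hv, hgen V v hv hV⟩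
  · rintro ⟨hVe, v, hv, hvi⟩
    refine ⟨?_, hVe, v, hv⟩
    rw [← hmap] at hvi
    exact (hQ.integrable_mSum hle hvi).congr (hac.ae_eq hv.2.2.symm)
  rintro ⟨V, hV, hVe, v, hv⟩ hH
  refine ⟨?_, ?_⟩
  · obtain ⟨u, hu, hum, hui, hue, hρ⟩ := exists_potential_of_generators hμ hle hPmeas hPpos hWmeas
      hWsymm hQ hmap hR hH hv.1 hv.2.1 (hV.congr (hac.ae_eq hv.2.2)) (hexp V v hv hVe)
    have hstruct : HasSumStruct μ N m (mSum N m u) u := ⟨hu, hum, ae_eq_refl _⟩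
    exact ⟨mSum N m u, u, hstruct,
      ⟨hui, (integrable_exp_Wmeas_iff μ hWmeas _).2 hue, u, hstruct⟩, hρ⟩
  · intro U₀ U₁ u₀ u₁ hU₀ hU₁ hu₀ hu₁ hρ₀ hρ₁
    have hstruct : ∀ i, HasSumStruct μ N m (![U₀, U₁] i) (![u₀, u₁] i) :=
      Fin.forall_fin_two.2 ⟨hu₀, hu₁⟩
    have hmem : ∀ i, memVP μ N m P W (![U₀, U₁] i) := Fin.forall_fin_two.2 ⟨hU₀, hU₁⟩
    have hρ : ∀ i, rhoU μ N m hle W (![U₀, U₁] i) =ᵐ[pm μ m] rho μ N m hle P :=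
      Fin.forall_fin_two.2 ⟨hρ₀, hρ₁⟩
    have he := fun i => hexp _ _ (hstruct i) (hmem i).2.1
    obtain ⟨k, hk⟩ : ∃ k : ℝ, ∀ᵐ x ∂(pm μ N), mSum N m u₁ x - mSum N m u₀ x = k :=
      mSum_sub_ae_eq_const hμ hle hWmeas hWsymm (fun i => (hstruct i).1)
        (fun i => (hstruct i).2.1) (fun i => hgen _ _ (hstruct i) (hmem i).1) he fun i =>
        (rhoU_ae_eq_iff hμ hle hPmeas hPpos hWmeas (measurable_mSum N (hstruct i).2.1) (he i)).1
          ((rhoU_congr_ae μ hle (hstruct i).2.2).symm.trans (hρ i))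
    refine ⟨⟨k, ?_⟩, ?_⟩
    · filter_upwards [hk, hu₀.2.2, hu₁.2.2] with x hx h0 h1
      rw [h0, h1, hx]
    · obtain ⟨c, hc⟩ := hR.generator_ae_eq_const hle (v := fun y => 1 * u₁ y + (-1) * u₀ y)
        (fun σ y => by simp only [hu₀.1 σ y, hu₁.1 σ y]) (a := k) (by
          filter_upwards [hac.ae_le hk] with x hx
          rw [mSum_linear, ← hx]
          ring)
      have hc' : ∀ᵐ q ∂((pm μ m).prod (pm μ (N - m))), 1 * u₁ q.1 + (-1) * u₀ q.1 = c := by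
        have := (measurePreserving_glue μ hle).quasiMeasurePreserving.ae (hac'.ae_le hc)
        simpa only [firstCoords_glue] using this
      have := pm_neZero hμ (N - m)
      refine ⟨c, ?_⟩
      filter_upwards [ae_of_ae_prod_fst (p := fun y => 1 * u₁ y + (-1) * u₀ y = c) hc'] with y hy
      rw [← hy]
      ring

end
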